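/- arXiv:1703.04787 — 4 statements merged into one kernel-verified Lean document; each statement's English description precedes it below -/
import Mathlib

section
/- Let R be a ring and let M and N be flat right R-modules that are invariant under endomorphisms of their cotorsion envelopes. If there is a pure monomorphism from M to N and a pure monomorphism from N to M, then M ≅ N. -/
/-!
Corollary 2.8(3): Schröder–Bernstein for flat modules invariant under endomorphisms of
their cotorsion envelopes. "Right R-modules" are formalized as Lean `Module R` modules
(the theory is side-symmetric).
-/

universe u

variable (R : Type u) [Ring R]

/-- `f : A → B` is a pure monomorphism. We use the standard equational criterion
(solvability of finite linear systems descends from `B` to `A`), which for arbitrary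
(possibly noncommutative) rings is equivalent to injectivity of `f ⊗ 1_C` for all
modules `C` on the other side. -/
def IsPureMono {A B : Type u} [AddCommGroup A] [Module R A] [AddCommGroup B] [Module R B]
    (f : A →ₗ[R] B) : Prop :=
  Function.Injective f ∧
    ∀ (m n : ℕ) (r : Fin m → Fin n → R) (a : Fin m → A),
      (∃ y : Fin n → B, ∀ i, ∑ j, r i j • y j = f (a i)) →
      ∃ x : Fin n → A, ∀ i, ∑ j, r i j • x j = a i

/-- `F` is a flat `R`-module: every surjection onto `F` has pure kernel, i.e. every short
exact sequence `0 → K → L → F → 0` is pure. (For arbitrary rings this is equivalent to the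
tensor-product definition of flatness.) -/
def IsFlatModule (F : Type u) [AddCommGroup F] [Module R F] : Prop :=
  ∀ (L : Type u) [AddCommGroup L] [Module R L] (p : L →ₗ[R] F),
    Function.Surjective p → IsPureMono R (LinearMap.ker p).subtype

/-- `M` is cotorsion, i.e. `Ext¹_R(F, M) = 0` for every flat `R`-module `F`: equivalently,
every monomorphism out of `M` with flat cokernel splits. -/
def IsCotorsionModule (M : Type u) [AddCommGroup M] [Module R M] : Prop :=
  ∀ (L : Type u) [AddCommGroup L] [Module R L] (v : M →ₗ[R] L),
    Function.Injective v → IsFlatModule R (L ⧸ LinearMap.range v) →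
    ∃ p : L →ₗ[R] M, p ∘ₗ v = LinearMap.id

/-- `u : M → C` is a cotorsion envelope of `M`: `u` is an injective homomorphism into a
cotorsion module `C`, every homomorphism from `M` to a cotorsion module factors through
`u`, and every endomorphism `h` of `C` with `h ∘ u = u` is an automorphism. -/
def IsCotorsionEnvelope (M C : Type u) [AddCommGroup M] [Module R M]
    [AddCommGroup C] [Module R C] (u : M →ₗ[R] C) : Prop :=
  Function.Injective u ∧ IsCotorsionModule R C ∧
    (∀ (Q : Type u) [AddCommGroup Q] [Module R Q], IsCotorsionModule R Q →
      ∀ f : M →ₗ[R] Q, ∃ g : C →ₗ[R] Q, g ∘ₗ u = f) ∧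
    (∀ h : C →ₗ[R] C, h ∘ₗ u = u → Function.Bijective h)

/-- `M` is invariant under endomorphisms of its cotorsion envelope: for a cotorsion
envelope `u : M → C` and every endomorphism `φ` of `C`, there is an endomorphism `f` of
`M` with `u ∘ f = φ ∘ u`. -/
def IsCotorsionEndoInvariant (M : Type u) [AddCommGroup M] [Module R M] : Prop :=
  ∃ (C : Type u) (_ : AddCommGroup C) (_ : Module R C) (u : M →ₗ[R] C),
    IsCotorsionEnvelope R M C u ∧
    ∀ φ : C →ₗ[R] C, ∃ f : M →ₗ[R] M, u ∘ₗ f = φ ∘ₗ u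

section Helpers

variable {R}

/-- Relative flatness of `V / Z`, elementwise. -/
def RelFlat {B : Type u} [AddCommGroup B] [Module R B] (V Z : Submodule R B) : Prop :=
  ∀ (m n : ℕ) (r : Fin m → Fin n → R) (x : Fin n → B), (∀ j, x j ∈ V) →
    (∀ i, ∑ j, r i j • x j ∈ Z) →
    ∃ (k : ℕ) (t : Fin k → B) (s : Fin n → Fin k → R), (∀ l, t l ∈ V) ∧
      (∀ i l, ∑ j, r i j * s j l = 0) ∧ ∀ j, x j - ∑ l, s j l • t l ∈ Z

lemma sum_rel {B : Type u} [AddCommGroup B] [Module R B] {m n k : ℕ}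
    (r : Fin m → Fin n → R) (s : Fin n → Fin k → R) (t : Fin k → B)
    (h : ∀ i l, ∑ j, r i j * s j l = 0) (i : Fin m) :
    ∑ j, r i j • ∑ l, s j l • t l = 0 := by
  simp_rw [Finset.smul_sum, smul_smul]
  rw [Finset.sum_comm]
  simp_rw [← Finset.sum_smul, h]
  simp

lemma flat_of_relFlat {B F : Type u} [AddCommGroup B] [Module R B] [AddCommGroup F] [Module R F]
    (V Z : Submodule R B) (π : V →ₗ[R] F) (hπ : Function.Surjective π)
    (hker : ∀ x : V, π x = 0 ↔ (x : B) ∈ Z) (h : RelFlat V Z) : IsFlatModule R F := by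
  intro L _ _ p hp
  refine ⟨Subtype.val_injective, ?_⟩
  rintro m n r a ⟨y, hy⟩
  choose x hx using fun j => hπ (p (y j))
  obtain ⟨k, t, s, ht, hrs, hd⟩ := h m n r (fun j => (x j : B)) (fun j => (x j).2) (by
    intro i
    have : π (∑ j, r i j • x j) = 0 := by
      have h2 := congrArg p (hy i)
      simp only [map_sum, map_smul] at h2 ⊢
      simp_rw [hx]
      rw [h2]
      exact (a i).2
    rw [hker] at this
    simpa using this)
  choose τ hτ using fun l => hp (π ⟨t l, ht l⟩)
  have key : ∀ j, y j - ∑ l, s j l • τ l ∈ LinearMap.ker p := by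
    intro j
    rw [LinearMap.mem_ker, map_sub, map_sum]
    simp_rw [map_smul, hτ]
    rw [← hx j]
    simp_rw [← map_smul]
    rw [← map_sum, ← map_sub, hker]
    simpa using hd j
  refine ⟨fun j => ⟨_, key j⟩, fun i => ?_⟩
  apply Subtype.ext
  have := hy i
  simp only [Submodule.subtype_apply] at this
  rw [← this]
  simp only [Submodule.coe_sum, Submodule.coe_smul, smul_sub, Finset.sum_sub_distrib]
  rw [sum_rel r s τ hrs, sub_zero]

lemma relFlat_of_flat {N : Type u} [AddCommGroup N] [Module R N] (h : IsFlatModule R N) :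
    RelFlat (⊤ : Submodule R N) ⊥ := by
  classical
  intro m n r x _ hx
  let p : (N →₀ R) →ₗ[R] N := Finsupp.linearCombination R id
  have hp : Function.Surjective p := fun y => ⟨Finsupp.single y 1, by simp [p]⟩
  obtain ⟨z, hz⟩ := (h (N →₀ R) p hp).2 m n r
    (fun i => ⟨∑ j, r i j • Finsupp.single (x j) 1, by
      have := hx i
      rw [Submodule.mem_bot] at this
      rw [LinearMap.mem_ker, map_sum]
      simp_rw [map_smul]
      simpa [p] using this⟩)
    ⟨fun j => Finsupp.single (x j) 1, fun i => rfl⟩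
  let w : Fin n → (N →₀ R) := fun j => Finsupp.single (x j) 1 - (z j : N →₀ R)
  have hw : ∀ i, ∑ j, r i j • w j = 0 := by
    intro i
    have := congrArg Subtype.val (hz i)
    simp only [Submodule.coe_sum, Submodule.coe_smul] at this
    simp only [w, smul_sub, Finset.sum_sub_distrib, this, sub_self]
  have hpw : ∀ j, p (w j) = x j := by
    intro j
    have : p (z j : N →₀ R) = 0 := (z j).2
    simp only [w, map_sub, this, sub_zero]
    simp [p]
  let U : Finset N := Finset.univ.biUnion fun j => (w j).support
  let e := U.equivFin
  refine ⟨U.card, fun l => (e.symm l : N), fun j l => w j (e.symm l), fun _ => trivial, ?_, ?_⟩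
  · intro i l
    have := DFunLike.congr_fun (hw i) (e.symm l : N)
    simpa [Finsupp.finsetSum_apply] using this
  · intro j
    rw [Submodule.mem_bot, sub_eq_zero]
    rw [Equiv.sum_comp e.symm (fun y : U => w j y • (y : N)),
      Finset.sum_coe_sort U (fun y => w j y • y)]
    rw [← hpw j]
    simp only [p, Finsupp.linearCombination_apply, id]
    exact Finsupp.sum_of_support_subset _
      (Finset.subset_biUnion_of_mem (fun j => (w j).support) (Finset.mem_univ j)) _ (by simp)

lemma relFlat_pure {N : Type u} [AddCommGroup N] [Module R N] (h : IsFlatModule R N)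
    (P : Submodule R N)
    (hP : ∀ (m n : ℕ) (r : Fin m → Fin n → R) (a : Fin m → N), (∀ i, a i ∈ P) →
      (∃ y : Fin n → N, ∀ i, ∑ j, r i j • y j = a i) →
      ∃ x : Fin n → N, (∀ j, x j ∈ P) ∧ ∀ i, ∑ j, r i j • x j = a i) :
    RelFlat ⊤ P := by
  intro m n r x _ hx
  obtain ⟨y, hyP, hy⟩ := hP m n r _ hx ⟨x, fun i => rfl⟩
  obtain ⟨k, t, s, ht, hrs, hd⟩ := relFlat_of_flat h m n r (fun j => x j - y j)
    (fun _ => trivial) (by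
      intro i
      simp only [smul_sub, Finset.sum_sub_distrib, hy, sub_self]
      exact Submodule.zero_mem _)
  refine ⟨k, t, s, ht, hrs, fun j => ?_⟩
  have := hd j
  rw [Submodule.mem_bot] at this
  have h2 : x j - ∑ l, s j l • t l = y j := by
    rw [← sub_eq_zero, ← this]; abel
  rw [h2]
  exact hyP j

lemma ext_cot {Q A B : Type u} [AddCommGroup Q] [Module R Q] [AddCommGroup A] [Module R A]
    [AddCommGroup B] [Module R B] (hQ : IsCotorsionModule R Q)
    (V W : Submodule R B) (j : A →ₗ[R] B) (hj : ∀ a, j a ∈ V)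
    (hinj : ∀ a, j a ∈ W → a = 0) (hfl : RelFlat V (W ⊔ LinearMap.range j)) (φ : A →ₗ[R] Q) :
    ∃ ψ : V →ₗ[R] Q, (∀ x : V, (x : B) ∈ W → ψ x = 0) ∧ ∀ a, ψ ⟨j a, hj a⟩ = φ a := by
  let S : Submodule R (Q × V) :=
    { carrier := {z | ∃ a, z.1 = φ a ∧ (z.2 : B) + j a ∈ W}
      zero_mem' := ⟨0, by simp⟩
      add_mem' := by
        rintro z z' ⟨a, h1, h2⟩ ⟨a', h1', h2'⟩
        refine ⟨a + a', by simp [h1, h1'], ?_⟩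
        have := W.add_mem h2 h2'
        convert this using 1
        simp only [Prod.snd_add, Submodule.coe_add, map_add]
        abel
      smul_mem' := by
        rintro c z ⟨a, h1, h2⟩
        refine ⟨c • a, by simp [h1], ?_⟩
        have := W.smul_mem c h2
        convert this using 1
        simp }
  have hS : ∀ z : Q × V, z ∈ S ↔ ∃ a, z.1 = φ a ∧ (z.2 : B) + j a ∈ W := fun z => Iff.rfl
  let v : Q →ₗ[R] ((Q × V) ⧸ S) := S.mkQ ∘ₗ LinearMap.inl R Q V
  have hv : Function.Injective v := by
    rw [injective_iff_map_eq_zero]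
    intro q hq
    have : (q, (0 : V)) ∈ S := by simpa [v] using hq
    obtain ⟨a, h1, h2⟩ := (hS _).1 this
    have ha := hinj a (by simpa using h2)
    simpa [ha] using h1
  let π : V →ₗ[R] (((Q × V) ⧸ S) ⧸ LinearMap.range v) :=
    (LinearMap.range v).mkQ ∘ₗ S.mkQ ∘ₗ LinearMap.inr R Q V
  have hπ : Function.Surjective π := by
    intro y
    obtain ⟨y, rfl⟩ := Submodule.mkQ_surjective _ y
    obtain ⟨⟨q, x⟩, rfl⟩ := Submodule.mkQ_surjective _ y
    refine ⟨x, ?_⟩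
    simp only [π, LinearMap.comp_apply, Submodule.mkQ_apply]
    rw [Submodule.Quotient.eq]
    refine ⟨-q, ?_⟩
    simp only [v, LinearMap.comp_apply, ← Submodule.mkQ_apply]
    rw [← map_sub]
    simp
  have hker : ∀ x : V, π x = 0 ↔ (x : B) ∈ W ⊔ LinearMap.range j := by
    intro x
    simp only [π, LinearMap.comp_apply, Submodule.mkQ_apply]
    rw [Submodule.Quotient.mk_eq_zero, Submodule.mem_sup]
    constructor
    · rintro ⟨q, hq⟩
      simp only [v, LinearMap.comp_apply, Submodule.mkQ_apply] at hq
      rw [eq_comm, Submodule.Quotient.eq] at hq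
      obtain ⟨a, h1, h2⟩ := (hS _).1 hq
      refine ⟨_, h2, _, ⟨-a, rfl⟩, ?_⟩
      simp
    · rintro ⟨w, hw, _, ⟨a, rfl⟩, hx⟩
      refine ⟨φ a, ?_⟩
      simp only [v, LinearMap.comp_apply, Submodule.mkQ_apply]
      rw [eq_comm, Submodule.Quotient.eq, hS]
      refine ⟨-a, by simp, ?_⟩
      simp [← hx, hw]
  obtain ⟨p, hp⟩ := hQ _ v hv (flat_of_relFlat V _ π hπ hker hfl)
  refine ⟨p ∘ₗ S.mkQ ∘ₗ LinearMap.inr R Q V, ?_, ?_⟩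
  · intro x hx
    have : S.mkQ (LinearMap.inr R Q V x) = 0 := by
      rw [Submodule.mkQ_apply, Submodule.Quotient.mk_eq_zero, hS]
      exact ⟨0, by simp, by simpa using hx⟩
    simp only [LinearMap.comp_apply]
    rw [this, map_zero]
  · intro a
    have : S.mkQ (LinearMap.inr R Q V ⟨j a, hj a⟩) = v (φ a) := by
      simp only [v, LinearMap.comp_apply, Submodule.mkQ_apply]
      rw [Submodule.Quotient.eq, hS]
      exact ⟨-a, by simp, by simp⟩
    simp only [LinearMap.comp_apply]
    rw [this]
    exact LinearMap.congr_fun hp (φ a)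

lemma relFlat_directed {B ι : Type u} [AddCommGroup B] [Module R B] [Nonempty ι]
    (V Z : ι → Submodule R B) (V' Z' : Submodule R B)
    (hd : Directed (· ≤ ·) (fun a => (V a, Z a)))
    (hV : ∀ a, V a ≤ V') (hZ : ∀ a, Z a ≤ Z')
    (hV' : ∀ x ∈ V', ∃ a, x ∈ V a) (hZ' : ∀ x ∈ Z', ∃ a, x ∈ Z a)
    (h : ∀ a, RelFlat (V a) (Z a)) : RelFlat V' Z' := by
  intro m n r x hx hrx
  choose a ha using fun j => hV' _ (hx j)
  choose b hb using fun i => hZ' _ (hrx i)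
  obtain ⟨c, hc⟩ := hd.finite_le (Sum.elim a b)
  obtain ⟨k, t, s, ht, hrs, hd⟩ := h c m n r x (fun j => (hc (Sum.inl j)).1 (ha j))
    (fun i => (hc (Sum.inr i)).2 (hb i))
  exact ⟨k, t, s, fun l => hV _ (ht l), hrs, fun j => hZ _ (hd j)⟩

section Core

variable {P E : Type u} [AddCommGroup P] [Module R P] [AddCommGroup E] [Module R E]

/-- Subquotients `supported S / W` of a direct sum of copies of `E`, extending `P`. -/
structure Obj (i : P →ₗ[R] E) {J : Type u} (o : J) (S : Set J) (W : Submodule R (J →₀ E)) :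
    Prop where
  le : W ≤ Finsupp.supported E R S
  mem : o ∈ S
  disj : ∀ p, Finsupp.single o (i p) ∈ W → p = 0
  flat : RelFlat (Finsupp.supported E R S) (W ⊔ LinearMap.range (Finsupp.lsingle o ∘ₗ i))

/-- Weak terminality. -/
def WT (i : P →ₗ[R] E) : Prop :=
  ∀ (J : Type u) (o : J) (S : Set J) (W : Submodule R (J →₀ E)), Obj i o S W →
    ∃ φ : (J →₀ E) →ₗ[R] E, (∀ w ∈ W, φ w = 0) ∧ ∀ p, φ (Finsupp.single o (i p)) = i p

lemma Obj.base (i : P →ₗ[R] E) (hi : Function.Injective i)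
    (hfl : RelFlat ⊤ (LinearMap.range i)) {J : Type u} (o : J) :
    Obj i o {o} (⊥ : Submodule R (J →₀ E)) := by
  refine ⟨bot_le, rfl, ?_, ?_⟩
  · intro p hp
    rw [Submodule.mem_bot, Finsupp.single_eq_zero] at hp
    exact hi (by simpa using hp)
  · intro m n r x hx hrx
    have hxs : ∀ j, x j = Finsupp.single o (x j o) := by
      intro j
      have := (Finsupp.mem_supported R (x j)).1 (hx j)
      exact Finsupp.support_subset_singleton.1 (by exact_mod_cast this)
    obtain ⟨k, t, s, ht, hrs, hd⟩ := hfl m n r (fun j => x j o) (fun _ => trivial) (by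
      intro i'
      have := hrx i'
      rw [bot_sup_eq] at this
      obtain ⟨p, hp⟩ := this
      refine ⟨p, ?_⟩
      have h2 := DFunLike.congr_fun hp o
      simpa [Finsupp.finsetSum_apply] using h2)
    refine ⟨k, fun l => Finsupp.single o (t l), s, ?_, hrs, ?_⟩
    · intro l
      exact Finsupp.single_mem_supported R _ rfl
    · intro j
      rw [bot_sup_eq]
      obtain ⟨p, hp⟩ := hd j
      refine ⟨p, ?_⟩
      rw [LinearMap.comp_apply, hp, hxs j]
      simp only [map_sub, map_sum, map_smul, Finsupp.lsingle_apply, Finsupp.single_eq_same]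

lemma Obj.chain {i : P →ₗ[R] E} {J : Type u} {o : J}
    (c : Set (Set J × Submodule R (J →₀ E))) (hc : IsChain (· ≤ ·) c) (hne : c.Nonempty)
    (h : ∀ z ∈ c, Obj i o z.1 z.2) :
    Obj i o (⋃ z : c, z.1.1) (⨆ z : c, z.1.2) := by
  have : Nonempty c := hne.to_subtype
  have hdir : Directed (· ≤ ·) (fun z : c => z.1) := hc.directed
  have hW : Directed (· ≤ ·) (fun z : c => z.1.2) :=
    fun a b => (hdir a b).imp fun d hd => ⟨hd.1.2, hd.2.2⟩
  have hS : Directed (· ≤ ·) (fun z : c => Finsupp.supported E R z.1.1) :=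
    fun a b => (hdir a b).imp fun d hd =>
      ⟨Finsupp.supported_mono hd.1.1, Finsupp.supported_mono hd.2.1⟩
  refine ⟨?_, ?_, ?_, ?_⟩
  · refine iSup_le fun z => (h z z.2).le.trans (Finsupp.supported_mono ?_)
    exact Set.subset_iUnion (fun z : c => z.1.1) z
  · obtain ⟨z, hz⟩ := hne
    exact Set.mem_iUnion.2 ⟨⟨z, hz⟩, (h z hz).mem⟩
  · intro p hp
    obtain ⟨z, hz⟩ := (Submodule.mem_iSup_of_directed _ hW).1 hp
    exact (h z z.2).disj p hz
  · refine relFlat_directed (fun z : c => Finsupp.supported E R z.1.1)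
      (fun z : c => z.1.2 ⊔ LinearMap.range (Finsupp.lsingle o ∘ₗ i)) _ _ ?_ ?_ ?_ ?_ ?_
      (fun z => (h z z.2).flat)
    · intro a b
      obtain ⟨d, h1, h2⟩ := hdir a b
      exact ⟨d, ⟨Finsupp.supported_mono h1.1, sup_le_sup_right h1.2 _⟩,
        ⟨Finsupp.supported_mono h2.1, sup_le_sup_right h2.2 _⟩⟩
    · exact fun z => Finsupp.supported_mono (Set.subset_iUnion (fun z : c => z.1.1) z)
    · exact fun z => sup_le_sup_right (le_iSup (fun z : c => z.1.2) z) _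
    · intro x hx
      rw [Finsupp.supported_iUnion] at hx
      exact (Submodule.mem_iSup_of_directed _ hS).1 hx
    · intro x hx
      obtain ⟨w, hw, p, hp, rfl⟩ := Submodule.mem_sup.1 hx
      obtain ⟨z, hz⟩ := (Submodule.mem_iSup_of_directed _ hW).1 hw
      exact ⟨z, Submodule.add_mem_sup hz hp⟩

/-- Change a map at the coordinate `s` to be the identity. -/
noncomputable def extMap {J : Type u} (φ : (J →₀ E) →ₗ[R] E) (s : J) : (J →₀ E) →ₗ[R] E :=
  φ + (LinearMap.id - φ ∘ₗ Finsupp.lsingle s) ∘ₗ Finsupp.lapply s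

lemma extMap_single {J : Type u} (φ : (J →₀ E) →ₗ[R] E) (s : J) (e : E) :
    extMap φ s (Finsupp.single s e) = e := by
  simp [extMap]

lemma extMap_supported {J : Type u} (φ : (J →₀ E) →ₗ[R] E) (s : J) (S : Set J) (hs : s ∉ S)
    (y : J →₀ E) (hy : y ∈ Finsupp.supported E R S) : extMap φ s y = φ y := by
  have : y s = 0 := by
    by_contra h
    exact hs ((Finsupp.mem_supported R y).1 hy (by simpa using h))
  simp [extMap, this]

lemma Obj.extend {i : P →ₗ[R] E}
    (hfl : RelFlat ⊤ (LinearMap.range i)) (hi : Function.Injective i) {J : Type u} {o : J}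
    {S : Set J} {W : Submodule R (J →₀ E)} (h : Obj i o S W) (φ : (J →₀ E) →ₗ[R] E)
    (hφ : ∀ p, φ (Finsupp.single o (i p)) = i p) (s : J)
    (hs : s ∉ S) :
    Obj i o (insert s S) (Finsupp.supported E R (insert s S) ⊓ LinearMap.ker (extMap φ s)) := by
  have ho : ∀ e : E, Finsupp.single o e ∈ Finsupp.supported E R S :=
    fun e => Finsupp.single_mem_supported R _ h.mem
  have hle : Finsupp.supported E R S ≤ Finsupp.supported E R (insert s S) :=
    Finsupp.supported_mono (Set.subset_insert _ _)
  have hΦ : ∀ p, extMap φ s (Finsupp.single o (i p)) = i p := fun p => by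
    rw [extMap_supported φ s S hs _ (ho _), hφ]
  refine ⟨inf_le_left, Set.mem_insert_of_mem _ h.mem, ?_, ?_⟩
  · rintro p ⟨-, hp⟩
    have hp : extMap φ s (Finsupp.single o (i p)) = 0 := hp
    rw [hΦ] at hp
    exact hi (by simpa using hp)
  · intro m n r x hx hrx
    obtain ⟨k, t, σ, ht, hrs, hd⟩ := hfl m n r (fun j => extMap φ s (x j)) (fun _ => trivial) (by
      intro a
      obtain ⟨w, hw, _, ⟨p, rfl⟩, hwp⟩ := Submodule.mem_sup.1 (hrx a)
      refine ⟨p, ?_⟩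
      have h0 : extMap φ s w = 0 := hw.2
      have := congrArg (extMap φ s) hwp
      rw [map_add, h0, zero_add, LinearMap.comp_apply, Finsupp.lsingle_apply, hΦ] at this
      rw [this]
      simp)
    have hsm : ∀ e : E, Finsupp.single s e ∈ Finsupp.supported E R (insert s S) :=
      fun e => Finsupp.single_mem_supported R _ (Set.mem_insert _ _)
    refine ⟨k, fun l => Finsupp.single s (t l), σ, fun l => hsm _, hrs, ?_⟩
    intro j
    obtain ⟨p, hp⟩ := hd j
    rw [Submodule.mem_sup]
    refine ⟨x j - ∑ l, σ j l • Finsupp.single s (t l) - Finsupp.single o (i p), ⟨?_, ?_⟩,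
      Finsupp.single o (i p), ⟨p, rfl⟩, by abel⟩
    · exact Submodule.sub_mem _ (Submodule.sub_mem _ (hx j)
        (Submodule.sum_mem _ fun l _ => Submodule.smul_mem _ _ (hsm _))) (hle (ho _))
    · change extMap φ s _ = 0
      simp only [map_sub, map_sum, map_smul, extMap_single, hΦ]
      rw [hp, sub_self]

lemma exists_stable (i : P →ₗ[R] E) (hi : Function.Injective i)
    (hfl : RelFlat ⊤ (LinearMap.range i)) (hwt : WT i) :
    ∃ h : E →ₗ[R] E, (∀ p, h (i p) = i p) ∧
      ∀ k : E →ₗ[R] E, (∀ p, k (i p) = i p) → ∀ x, k (h x) = 0 → h x = 0 := by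
  obtain ⟨⟨S, W⟩, -, hmax⟩ := zorn_le_nonempty₀
    {z : Set (Option E) × Submodule R (Option E →₀ E) | Obj i none z.1 z.2 ∧
      ∀ x, some x ∈ z.1 → Finsupp.single none x ∈ z.2} (by
    intro c hcs hc y hy
    refine ⟨(⋃ z : c, z.1.1, ⨆ z : c, z.1.2),
      ⟨Obj.chain c hc ⟨y, hy⟩ fun z hz => (hcs hz).1, ?_⟩, ?_⟩
    · intro x hx
      obtain ⟨z, hz⟩ := Set.mem_iUnion.1 hx
      exact (le_iSup (fun z : c => z.1.2) z) ((hcs z.2).2 x hz)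
    · intro z hz
      exact ⟨Set.subset_iUnion (fun z : c => z.1.1) ⟨z, hz⟩,
        le_iSup (fun z : c => z.1.2) ⟨z, hz⟩⟩) ({none}, ⊥)
    ⟨Obj.base i hi hfl none, by simp⟩
  obtain ⟨hobj, hprop⟩ := hmax.prop
  obtain ⟨φ, hφW, hφP⟩ := hwt _ _ _ _ hobj
  refine ⟨φ ∘ₗ Finsupp.lsingle none, hφP, ?_⟩
  intro k hk x hx
  by_contra hne
  have hxS : some x ∉ S := fun hxS => hne (hφW _ (hprop x hxS))
  have hkφ : ∀ p, (k ∘ₗ φ) (Finsupp.single none (i p)) = i p := fun p => by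
    rw [LinearMap.comp_apply, hφP, hk]
  have hext := hobj.extend hfl hi (k ∘ₗ φ) hkφ (some x) hxS
  have hWle : W ≤ Finsupp.supported E R (insert (some x) S) ⊓
      LinearMap.ker (extMap (k ∘ₗ φ) (some x)) := by
    intro w hw
    refine ⟨Finsupp.supported_mono (Set.subset_insert _ _) (hobj.le hw), ?_⟩
    change extMap _ _ _ = 0
    rw [extMap_supported _ _ S hxS _ (hobj.le hw), LinearMap.comp_apply, hφW w hw, map_zero]
  have := hmax.le_of_ge (y := (insert (some x) S, Finsupp.supported E R (insert (some x) S) ⊓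
      LinearMap.ker (extMap (k ∘ₗ φ) (some x)))) ⟨hext, ?_⟩ ⟨Set.subset_insert _ _, hWle⟩
  · exact hxS (this.1 (Set.mem_insert _ _))
  · intro y hy
    rcases hy with hy | hy
    · obtain rfl : y = x := by simpa using hy
      have hm : Finsupp.single none y ∈ Finsupp.supported E R S :=
        Finsupp.single_mem_supported R _ hobj.mem
      refine ⟨Finsupp.supported_mono (Set.subset_insert _ _) hm, ?_⟩
      change extMap _ _ _ = 0
      rw [extMap_supported _ _ S hxS _ hm]
      exact hx
    · exact hWle (hprop y hy)

lemma surj_of_inj (i : P →ₗ[R] E) (hi : Function.Injective i)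
    (hfl : RelFlat ⊤ (LinearMap.range i)) (hwt : WT i)
    (hinj : ∀ k : E →ₗ[R] E, (∀ p, k (i p) = i p) → Function.Injective k)
    (g : E →ₗ[R] E) (hg : ∀ p, g (i p) = i p) : Function.Surjective g := by
  by_contra hns
  simp only [Function.Surjective, not_forall, not_exists] at hns
  obtain ⟨e, he⟩ := hns
  obtain ⟨⟨S, W⟩, -, hmax⟩ := zorn_le_nonempty₀
    {z : Set (Option (Set E)) × Submodule R (Option (Set E) →₀ E) | Obj i none z.1 z.2 ∧
      (∀ s t, some s ∈ z.1 → some t ∈ z.1 → s ≠ t →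
        Finsupp.single (some s) e - Finsupp.single (some t) e ∉ z.2) ∧
      ∀ φ : (Option (Set E) →₀ E) →ₗ[R] E, (∀ w ∈ z.2, φ w = 0) →
        (∀ p, φ (Finsupp.single none (i p)) = i p) →
        ∀ x ∈ Finsupp.supported E R z.1, φ x = 0 → x ∈ z.2} (by
    intro c hcs hc y hy
    have : Nonempty c := ⟨⟨y, hy⟩⟩
    have hdir : Directed (· ≤ ·) (fun z : c => z.1) := hc.directed
    have hW : Directed (· ≤ ·) (fun z : c => z.1.2) :=
      fun a b => (hdir a b).imp fun d hd => ⟨hd.1.2, hd.2.2⟩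
    have hS : Directed (· ≤ ·) (fun z : c => Finsupp.supported E R z.1.1) :=
      fun a b => (hdir a b).imp fun d hd =>
        ⟨Finsupp.supported_mono hd.1.1, Finsupp.supported_mono hd.2.1⟩
    refine ⟨(⋃ z : c, z.1.1, ⨆ z : c, z.1.2),
      ⟨Obj.chain c hc ⟨y, hy⟩ fun z hz => (hcs hz).1, ?_, ?_⟩, ?_⟩
    · intro s t hs ht hst hm
      obtain ⟨z1, h1⟩ := Set.mem_iUnion.1 hs
      obtain ⟨z2, h2⟩ := Set.mem_iUnion.1 ht
      obtain ⟨z3, h3⟩ := (Submodule.mem_iSup_of_directed _ hW).1 hm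
      obtain ⟨z4, h14, h24⟩ := hdir z1 z2
      obtain ⟨z5, h45, h35⟩ := hdir z4 z3
      exact (hcs z5.2).2.1 s t (h45.1 (h14.1 h1)) (h45.1 (h24.1 h2)) hst (h35.2 h3)
    · intro φ hφ hφP x hx hx0
      rw [Finsupp.supported_iUnion] at hx
      obtain ⟨z, hz⟩ := (Submodule.mem_iSup_of_directed _ hS).1 hx
      have hzle := le_iSup (fun z : c => z.1.2) z
      exact hzle ((hcs z.2).2.2 φ (fun w hw => hφ w (hzle hw)) hφP x hz hx0)
    · intro z hz
      exact ⟨Set.subset_iUnion (fun z : c => z.1.1) ⟨z, hz⟩,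
        le_iSup (fun z : c => z.1.2) ⟨z, hz⟩⟩) ({none}, ⊥)
    ⟨Obj.base i hi hfl none, by simp, by
      intro φ _ hφP x hx hx0
      replace hx : x ∈ Finsupp.supported E R {none} := hx
      have hxs : x = Finsupp.single none (x none) := by
        have := (Finsupp.mem_supported R x).1 hx
        exact Finsupp.support_subset_singleton.1 (by exact_mod_cast this)
      have := hinj (φ ∘ₗ Finsupp.lsingle none) hφP
      have h0 : x none = 0 := by
        apply this
        rw [map_zero, LinearMap.comp_apply, Finsupp.lsingle_apply, ← hxs, hx0]
      rw [hxs, h0]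
      simp⟩
  obtain ⟨hobj, hd, hker⟩ := hmax.prop
  dsimp only at hobj hd hker
  obtain ⟨ψ, hψW, hψP⟩ := hwt _ _ _ _ hobj
  have hroom : ∃ s, some s ∉ S := by
    by_contra hall
    push Not at hall
    apply Function.cantor_injective (fun s : Set E => ψ (Finsupp.single (some s) e))
    intro s t hst
    by_contra hne
    refine hd s t (hall s) (hall t) hne (hker ψ hψW hψP _ ?_ ?_)
    · exact Submodule.sub_mem _ (Finsupp.single_mem_supported R _ (hall s))
        (Finsupp.single_mem_supported R _ (hall t))
    · rw [map_sub, sub_eq_zero]; exact hst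
  obtain ⟨s, hs⟩ := hroom
  have hgψ : ∀ p, (g ∘ₗ ψ) (Finsupp.single none (i p)) = i p := fun p => by
    rw [LinearMap.comp_apply, hψP, hg]
  have hext := hobj.extend hfl hi (g ∘ₗ ψ) hgψ (some s) hs
  set Φ := extMap (g ∘ₗ ψ) (some s) with hΦ
  set W' := Finsupp.supported E R (insert (some s) S) ⊓ LinearMap.ker Φ with hW'
  have hle : Finsupp.supported E R S ≤ Finsupp.supported E R (insert (some s) S) :=
    Finsupp.supported_mono (Set.subset_insert _ _)
  have hΦS : ∀ y ∈ Finsupp.supported E R S, Φ y = g (ψ y) := fun y hy =>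
    extMap_supported _ _ S hs _ hy
  have hΦs : ∀ a, Φ (Finsupp.single (some s) a) = a := fun a => extMap_single _ _ _
  have hWle : W ≤ W' := by
    intro w hw
    refine ⟨hle (hobj.le hw), ?_⟩
    change Φ w = 0
    rw [hΦS _ (hobj.le hw), hψW w hw, map_zero]
  have hsing : ∀ t, some t ∈ S → ∀ a : E,
      Finsupp.single (some t) a ∈ Finsupp.supported E R S :=
    fun t ht a => Finsupp.single_mem_supported R _ ht
  have := hmax.le_of_ge (y := (insert (some s) S, W')) ⟨hext, ?_, ?_⟩
    ⟨Set.subset_insert _ _, hWle⟩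
  · exact hs (this.1 (Set.mem_insert _ _))
  · intro a b ha hb hab hm
    have h0 : Φ (Finsupp.single (some a) e - Finsupp.single (some b) e) = 0 := hm.2
    rw [map_sub, sub_eq_zero] at h0
    rcases ha with ha | ha <;> rcases hb with hb | hb
    · exact hab (by simpa using ha.trans hb.symm)
    · rw [ha, hΦs, hΦS _ (hsing b hb e)] at h0
      exact he _ h0.symm
    · rw [hb, hΦs, hΦS _ (hsing a ha e)] at h0
      exact he _ h0
    · rw [hΦS _ (hsing a ha e), hΦS _ (hsing b hb e)] at h0
      have h1 := hinj g hg h0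
      refine hd a b ha hb hab (hker ψ hψW hψP _ ?_ ?_)
      · exact Submodule.sub_mem _ (hsing a ha e) (hsing b hb e)
      · rw [map_sub, sub_eq_zero]; exact h1
  · intro χ hχ hχP x hx hx0
    have key : ∀ y ∈ Finsupp.supported E R (insert (some s) S),
        χ y = χ (Finsupp.single (some s) (Φ y)) := by
      intro y hy
      rw [← sub_eq_zero, ← map_sub]
      apply hχ
      refine ⟨Submodule.sub_mem _ hy (Finsupp.single_mem_supported R _ (Set.mem_insert _ _)), ?_⟩
      change Φ _ = 0
      rw [map_sub, hΦs, sub_self]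
    have hnone : ∀ a : E, Finsupp.single none a ∈ Finsupp.supported E R S :=
      fun a => Finsupp.single_mem_supported R _ hobj.mem
    have hε := hinj (χ ∘ₗ Finsupp.lsingle (some s)) (by
      intro p
      have := key _ (hle (hnone (i p)))
      rw [hΦS _ (hnone _), hψP, hg, hχP] at this
      exact this.symm)
    refine ⟨hx, ?_⟩
    change Φ x = 0
    apply hε
    rw [map_zero, LinearMap.comp_apply, Finsupp.lsingle_apply, ← key x hx, hx0]

end Core

section Omega

variable {P E N D : Type u} [AddCommGroup P] [Module R P] [AddCommGroup E] [Module R E]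
  [AddCommGroup N] [Module R N] [AddCommGroup D] [Module R D]

/-- A map whose values lie in the range of an injective map lifts. -/
lemma lift_range {A : Type u} [AddCommGroup A] [Module R A] (v : N →ₗ[R] D)
    (hv : Function.Injective v) (ψ : A →ₗ[R] D) (h : ∀ a, ψ a ∈ LinearMap.range v) :
    ∃ χ : A →ₗ[R] N, ∀ a, v (χ a) = ψ a := by
  refine ⟨(LinearEquiv.ofInjective v hv).symm.toLinearMap ∘ₗ ψ.codRestrict _ h, fun a => ?_⟩
  have := LinearEquiv.apply_symm_apply (LinearEquiv.ofInjective v hv) (ψ.codRestrict _ h a)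
  exact congrArg Subtype.val this

lemma map_to_N (hD : IsCotorsionModule R D) (v : N →ₗ[R] D) (hv : Function.Injective v)
    (hinv : ∀ ψ : N →ₗ[R] D, ∀ y, ψ y ∈ LinearMap.range v)
    (hgen : ∀ x : E, ∃ (τ : N →ₗ[R] E) (y : N), τ y = x)
    (i : P →ₗ[R] E) (φ : P →ₗ[R] N)
    {J : Type u} {o : J} {S : Set J} {W : Submodule R (J →₀ E)} (h : Obj i o S W) :
    ∃ χ : (J →₀ E) →ₗ[R] N, (∀ w ∈ W, χ w = 0) ∧ ∀ p, χ (Finsupp.single o (i p)) = φ p := by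
  classical
  have hj : ∀ p, (Finsupp.lsingle o ∘ₗ i) p ∈ Finsupp.supported E R S :=
    fun p => Finsupp.single_mem_supported R _ h.mem
  obtain ⟨ψ, hψW, hψP⟩ := ext_cot hD (Finsupp.supported E R S) W (Finsupp.lsingle o ∘ₗ i)
    hj h.disj h.flat (v ∘ₗ φ)
  let ψ' : (J →₀ E) →ₗ[R] D := ψ ∘ₗ Finsupp.restrictDom E R S
  have hr : ∀ x (hx : x ∈ Finsupp.supported E R S), ψ' x = ψ ⟨x, hx⟩ := by
    intro x hx
    have := LinearMap.congr_fun (Finsupp.restrictDom_comp_subtype (M := E) (R := R) S) ⟨x, hx⟩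
    exact congrArg ψ this
  obtain ⟨χ, hχ⟩ := lift_range v hv ψ' (by
    intro x
    induction x using Finsupp.induction_linear with
    | zero => rw [map_zero]; exact Submodule.zero_mem _
    | add a b ha hb => rw [map_add]; exact Submodule.add_mem _ ha hb
    | single j e =>
      obtain ⟨τ, y, rfl⟩ := hgen e
      exact hinv (ψ' ∘ₗ Finsupp.lsingle j ∘ₗ τ) y)
  refine ⟨χ, fun w hw => hv ?_, fun p => hv ?_⟩
  · rw [hχ, hr w (h.le hw), hψW _ hw, map_zero]
  · rw [hχ]
    exact (hr _ (hj p)).trans (hψP p)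

lemma wt_of (hD : IsCotorsionModule R D) (v : N →ₗ[R] D) (hv : Function.Injective v)
    (hinv : ∀ ψ : N →ₗ[R] D, ∀ y, ψ y ∈ LinearMap.range v)
    (hgen : ∀ x : E, ∃ (τ : N →ₗ[R] E) (y : N), τ y = x)
    (i : P →ₗ[R] E) (i₀ : P →ₗ[R] N) (κ : N →ₗ[R] E) (hκ : ∀ p, κ (i₀ p) = i p) : WT i := by
  intro J o S W h
  obtain ⟨χ, h1, h2⟩ := map_to_N hD v hv hinv hgen i i₀ h
  exact ⟨κ ∘ₗ χ, fun w hw => by simp [h1 w hw], fun p => by simp [h2, hκ]⟩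

/-- The sequences that eventually follow `h`. -/
def evSeq (h : N →ₗ[R] N) : Submodule R (ℕ → N) where
  carrier := {a | ∃ m, ∀ n ≥ m, a (n + 1) = h (a n)}
  zero_mem' := ⟨0, by simp⟩
  add_mem' := by
    rintro a b ⟨m, hm⟩ ⟨m', hm'⟩
    refine ⟨max m m', fun n hn => ?_⟩
    simp [hm n (le_trans (le_max_left _ _) hn), hm' n (le_trans (le_max_right _ _) hn)]
  smul_mem' := by
    rintro c a ⟨m, hm⟩
    exact ⟨m, fun n hn => by simp [hm n hn]⟩

/-- The eventually vanishing sequences. -/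
def evZero (h : N →ₗ[R] N) : Submodule R (evSeq h) where
  carrier := {a | ∃ m, ∀ n ≥ m, a.1 n = 0}
  zero_mem' := ⟨0, by simp⟩
  add_mem' := by
    rintro a b ⟨m, hm⟩ ⟨m', hm'⟩
    refine ⟨max m m', fun n hn => ?_⟩
    simp [hm n (le_trans (le_max_left _ _) hn), hm' n (le_trans (le_max_right _ _) hn)]
  smul_mem' := by
    rintro c a ⟨m, hm⟩
    exact ⟨m, fun n hn => by simp [hm n hn]⟩

lemma mem_evZero (h : N →ₗ[R] N) (a : evSeq h) : a ∈ evZero h ↔ ∃ m, ∀ n ≥ m, a.1 n = 0 :=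
  Iff.rfl

/-- The telescope of `h`. -/
abbrev Tel (h : N →ₗ[R] N) : Type u := evSeq h ⧸ evZero h

/-- The structure maps of the telescope. -/
def tel (h : N →ₗ[R] N) (m : ℕ) : N →ₗ[R] Tel h :=
  (evZero h).mkQ ∘ₗ
  { toFun := fun x => ⟨fun k => (h ^ (k - m)) x, m, fun n hn => by
      dsimp only
      rw [Nat.succ_sub hn, pow_succ', Module.End.mul_apply]⟩
    map_add' := fun x y => by ext k; simp
    map_smul' := fun c x => by ext k; simp }

lemma tel_eq (h : N →ₗ[R] N) (a : evSeq h) (m : ℕ) (hm : ∀ n ≥ m, a.1 (n + 1) = h (a.1 n)) :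
    (evZero h).mkQ a = tel h m (a.1 m) := by
  rw [tel, LinearMap.comp_apply, Submodule.mkQ_apply, Submodule.mkQ_apply, Submodule.Quotient.eq,
    mem_evZero]
  refine ⟨m, fun n hn => ?_⟩
  have : a.1 n = (h ^ (n - m)) (a.1 m) := by
    induction n, hn using Nat.le_induction with
    | base => simp
    | succ n hn ih =>
      rw [hm n hn, ih, Nat.succ_sub hn, pow_succ', Module.End.mul_apply]
  simpa [sub_eq_zero] using this

lemma tel_succ (h : N →ₗ[R] N) (m : ℕ) (x : N) : tel h m x = tel h (m + 1) (h x) := by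
  have := tel_eq h ⟨fun k => (h ^ (k - m)) x, m, fun n hn => by
      dsimp only
      rw [Nat.succ_sub hn, pow_succ', Module.End.mul_apply]⟩ (m + 1) (fun n hn => by
      dsimp only
      rw [Nat.succ_sub (by omega), pow_succ', Module.End.mul_apply])
  simpa [tel] using this

lemma tel_add (h : N →ₗ[R] N) (m k : ℕ) (x : N) : tel h m x = tel h (m + k) ((h ^ k) x) := by
  induction k with
  | zero => simp
  | succ k ih => rw [ih, tel_succ, pow_succ', Module.End.mul_apply]; rfl

lemma tel_surj (h : N →ₗ[R] N) (x : Tel h) : ∃ m y, ∀ k, x = tel h (m + k) ((h ^ k) y) := by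
  obtain ⟨a, rfl⟩ := Submodule.mkQ_surjective _ x
  obtain ⟨m, hm⟩ := a.2
  exact ⟨m, a.1 m, fun k => by rw [tel_eq h a m hm, tel_add]⟩

lemma tel_zero (h : N →ₗ[R] N) (m : ℕ) (x : N) (hx : tel h m x = 0) : ∃ k, (h ^ k) x = 0 := by
  rw [tel, LinearMap.comp_apply, Submodule.mkQ_apply, Submodule.Quotient.mk_eq_zero,
    mem_evZero] at hx
  obtain ⟨n, hn⟩ := hx
  exact ⟨n + m - m, hn (n + m) (by omega)⟩

lemma tel_fix (h : N →ₗ[R] N) (x : N) (hx : h x = x) (m : ℕ) : tel h m x = tel h 0 x := by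
  induction m with
  | zero => rfl
  | succ m ih => rw [← ih, tel_succ h m, hx]

lemma pow_fix (h : N →ₗ[R] N) (x : N) (hx : h x = x) (m : ℕ) : (h ^ m) x = x := by
  induction m with
  | zero => simp
  | succ m ih => rw [pow_succ', Module.End.mul_apply, ih, hx]

/-- simultaneous representation of finitely many elements -/
lemma tel_fin (h : N →ₗ[R] N) {n : ℕ} (x : Fin n → Tel h) :
    ∃ m, ∃ y : Fin n → N, ∀ j, x j = tel h m (y j) := by
  choose m y hy using fun j => tel_surj h (x j)
  refine ⟨∑ j, m j, fun j => (h ^ (∑ j, m j - m j)) (y j), fun j => ?_⟩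
  have hle : m j ≤ ∑ j, m j := Finset.single_le_sum (fun _ _ => Nat.zero_le _) (Finset.mem_univ j)
  have := hy j (∑ j, m j - m j)
  rwa [Nat.add_sub_cancel' hle] at this

lemma tel_flat (h : N →ₗ[R] N) (i₀ : P →ₗ[R] N) (hfix : ∀ p, h (i₀ p) = i₀ p)
    (hfl : RelFlat ⊤ (LinearMap.range i₀)) :
    RelFlat ⊤ (LinearMap.range (tel h 0 ∘ₗ i₀)) := by
  intro a n r x _ hrx
  obtain ⟨m, y, hy⟩ := tel_fin h x
  choose p hp using hrx
  have h1 : ∀ i, ∃ k, (h ^ k) (∑ j, r i j • y j - i₀ (p i)) = 0 := by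
    intro i
    apply tel_zero h m
    have := hp i
    rw [LinearMap.comp_apply, ← tel_fix h _ (hfix _) m] at this
    rw [map_sub, this, map_sum, sub_eq_zero]
    simp only [map_smul, hy]
  choose k hk using h1
  have hK : ∀ i, (h ^ (∑ i, k i)) (∑ j, r i j • y j - i₀ (p i)) = 0 := by
    intro i
    have hle : k i ≤ ∑ i, k i :=
      Finset.single_le_sum (fun _ _ => Nat.zero_le _) (Finset.mem_univ i)
    rw [← Nat.sub_add_cancel hle, pow_add, Module.End.mul_apply, hk, map_zero]
  set K := ∑ i, k i
  obtain ⟨l, t, s, -, hrs, hd⟩ := hfl a n r (fun j => (h ^ K) (y j)) (fun _ => trivial) (by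
    intro i
    refine ⟨p i, ?_⟩
    have := hK i
    rw [map_sub, pow_fix h _ (hfix _), sub_eq_zero, map_sum] at this
    simp only [map_smul] at this
    exact this.symm)
  refine ⟨l, fun b => tel h (m + K) (t b), s, fun _ => trivial, hrs, fun j => ?_⟩
  obtain ⟨q, hq⟩ := hd j
  refine ⟨q, ?_⟩
  rw [LinearMap.comp_apply, ← tel_fix h _ (hfix _) (m + K), hq, map_sub, map_sum, hy j,
    tel_add h m K]
  simp only [map_smul]

/-- Existence of a minimal relative envelope. -/
lemma exists_min (hD : IsCotorsionModule R D) (v : N →ₗ[R] D) (hv : Function.Injective v)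
    (hinv : ∀ ψ : N →ₗ[R] D, ∀ y, ψ y ∈ LinearMap.range v)
    (i₀ : P →ₗ[R] N) (hi₀ : Function.Injective i₀) (hfl : RelFlat ⊤ (LinearMap.range i₀)) :
    ∃ (E : Type u) (_ : AddCommGroup E) (_ : Module R E) (κ : N →ₗ[R] E) (β : E →ₗ[R] N),
      (∀ p, β (κ (i₀ p)) = i₀ p) ∧
      ∀ k : E →ₗ[R] E, (∀ p, k (κ (i₀ p)) = κ (i₀ p)) → Function.Bijective k := by
  have hwt : WT i₀ := wt_of hD v hv hinv (fun x => ⟨LinearMap.id, x, rfl⟩) i₀ i₀ LinearMap.id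
    (fun _ => rfl)
  obtain ⟨h, hfix, hst⟩ := exists_stable i₀ hi₀ hfl hwt
  let i : P →ₗ[R] Tel h := tel h 0 ∘ₗ i₀
  have hi : Function.Injective i := by
    rw [injective_iff_map_eq_zero]
    intro p hp
    obtain ⟨k, hk⟩ := tel_zero h 0 _ hp
    rw [pow_fix h _ (hfix p)] at hk
    exact hi₀ (by rw [hk, map_zero])
  have hifl : RelFlat ⊤ (LinearMap.range i) := tel_flat h i₀ hfix hfl
  have hgen : ∀ x : Tel h, ∃ (τ : N →ₗ[R] Tel h) (y : N), τ y = x := by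
    intro x
    obtain ⟨m, y, hy⟩ := tel_surj h x
    exact ⟨tel h m, y, by simpa using (hy 0).symm⟩
  have hiwt : WT i := wt_of hD v hv hinv hgen i i₀ (tel h 0) (fun _ => rfl)
  obtain ⟨χ, -, hχ⟩ := map_to_N hD v hv hinv hgen i i₀ (Obj.base i hi hifl (PUnit.unit : PUnit))
  have hinjN : ∀ φ : Tel h →ₗ[R] N, (∀ p, φ (i p) = i₀ p) → Function.Injective φ := by
    intro φ hφ
    rw [injective_iff_map_eq_zero]
    intro x hx
    obtain ⟨m, y, hy⟩ := tel_surj h x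
    have h0 : x = tel h m y := by simpa using hy 0
    rw [h0, tel_succ] at hx
    have := hst (φ ∘ₗ tel h (m + 1)) (fun p => by
      rw [LinearMap.comp_apply, tel_fix h _ (hfix p)]; exact hφ p) y hx
    rw [h0, tel_succ, this, map_zero]
  have hβ : ∀ p, (χ ∘ₗ Finsupp.lsingle PUnit.unit) (i p) = i₀ p := hχ
  have hinjE : ∀ k : Tel h →ₗ[R] Tel h, (∀ p, k (i p) = i p) → Function.Injective k := by
    intro k hk
    have := hinjN ((χ ∘ₗ Finsupp.lsingle PUnit.unit) ∘ₗ k) (fun p => by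
      rw [LinearMap.comp_apply, hk, hβ])
    exact Function.Injective.of_comp (f := χ ∘ₗ Finsupp.lsingle PUnit.unit) this
  exact ⟨Tel h, inferInstance, inferInstance, tel h 0, χ ∘ₗ Finsupp.lsingle PUnit.unit, hβ,
    fun k hk => ⟨hinjE k hk, surj_of_inj i hi hifl hiwt hinjE k hk⟩⟩

end Omega

section Split

/-- The retraction `r`. -/
lemma ext_pure {M N Q : Type u} [AddCommGroup M] [Module R M] [AddCommGroup N] [Module R N]
    [AddCommGroup Q] [Module R Q] (hN : IsFlatModule R N) (f : M →ₗ[R] N) (hf : IsPureMono R f)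
    (hQ : IsCotorsionModule R Q) (φ : M →ₗ[R] Q) : ∃ w : N →ₗ[R] Q, w ∘ₗ f = φ := by
  have hfl : RelFlat ⊤ (LinearMap.range f) := by
    apply relFlat_pure hN
    rintro m n r a ha ⟨y, hy⟩
    choose b hb using ha
    obtain ⟨x, hx⟩ := hf.2 m n r b ⟨y, fun i => by rw [hy, hb]⟩
    refine ⟨fun j => f (x j), fun j => ⟨_, rfl⟩, fun i => ?_⟩
    rw [← hb, ← hx]
    simp
  obtain ⟨ψ, -, hψ⟩ := ext_cot hQ ⊤ ⊥ f (fun _ => trivial) (fun a ha => hf.1 (by simpa using ha))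
    (by rwa [bot_sup_eq]) φ
  exact ⟨ψ ∘ₗ Submodule.topEquiv.symm.toLinearMap, LinearMap.ext hψ⟩

lemma env_retract {M N C D : Type u} [AddCommGroup M] [Module R M] [AddCommGroup N] [Module R N]
    [AddCommGroup C] [Module R C] [AddCommGroup D] [Module R D]
    (hN : IsFlatModule R N) (f : M →ₗ[R] N) (hf : IsPureMono R f)
    (u : M →ₗ[R] C) (hu : IsCotorsionEnvelope R M C u)
    (v : N →ₗ[R] D) (hv : IsCotorsionEnvelope R N D v) :
    ∃ (F : C →ₗ[R] D) (G : D →ₗ[R] C), F ∘ₗ u = v ∘ₗ f ∧ G ∘ₗ F = LinearMap.id := by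
  obtain ⟨F, hF⟩ := hu.2.2.1 D hv.2.1 (v ∘ₗ f)
  obtain ⟨w, hw⟩ := ext_pure hN f hf hu.2.1 u
  obtain ⟨G, hG⟩ := hv.2.2.1 C hu.2.1 w
  have hb := hu.2.2.2 (G ∘ₗ F) (by
    rw [LinearMap.comp_assoc, hF, ← LinearMap.comp_assoc, hG, hw])
  refine ⟨F, (LinearEquiv.ofBijective _ hb).symm.toLinearMap ∘ₗ G, hF, ?_⟩
  ext x
  exact (LinearEquiv.ofBijective _ hb).symm_apply_apply x

lemma split_of {M N C D : Type u} [AddCommGroup M] [Module R M] [AddCommGroup N] [Module R N]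
    [AddCommGroup C] [Module R C] [AddCommGroup D] [Module R D]
    (f : M →ₗ[R] N) (g : N →ₗ[R] M) (u : M →ₗ[R] C) (hu : Function.Injective u) (v : N →ₗ[R] D)
    (hinv : ∀ φ : C →ₗ[R] C, ∃ f : M →ₗ[R] M, u ∘ₗ f = φ ∘ₗ u)
    (F : C →ₗ[R] D) (G : D →ₗ[R] C) (hF : F ∘ₗ u = v ∘ₗ f) (hGF : G ∘ₗ F = LinearMap.id)
    (F' : D →ₗ[R] C) (G' : C →ₗ[R] D) (hF' : F' ∘ₗ v = u ∘ₗ g) (hGF' : G' ∘ₗ F' = LinearMap.id) :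
    ∃ r : N →ₗ[R] M, ∀ x, r (f x) = x := by
  obtain ⟨a, ha⟩ := hinv (G ∘ₗ G')
  refine ⟨a ∘ₗ g, fun x => hu ?_⟩
  have h1 := LinearMap.congr_fun ha (g (f x))
  have h2 := LinearMap.congr_fun hF' (f x)
  have h3 := LinearMap.congr_fun hGF' (v (f x))
  have h4 := LinearMap.congr_fun hF x
  have h5 := LinearMap.congr_fun hGF (u x)
  simp only [LinearMap.comp_apply, LinearMap.id_apply] at *
  rw [h1, ← h2, h3, ← h4, h5]

/-- A split monomorphism gives a direct sum decomposition. -/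
lemma retractEquiv {A B : Type u} [AddCommGroup A] [Module R A] [AddCommGroup B] [Module R B]
    (s : A →ₗ[R] B) (t : B →ₗ[R] A) (h : ∀ a, t (s a) = a) :
    Nonempty (B ≃ₗ[R] LinearMap.ker t × A) := by
  refine ⟨LinearEquiv.ofBijective
    (((LinearMap.id - s ∘ₗ t).codRestrict (LinearMap.ker t) (fun b => by simp [h])).prod t) ⟨?_, ?_⟩⟩
  · rw [injective_iff_map_eq_zero]
    intro b hb
    have h1 : b - s (t b) = 0 := congrArg Subtype.val (congrArg Prod.fst hb)
    have h2 : t b = 0 := congrArg Prod.snd hb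
    simpa [h2] using h1
  · rintro ⟨⟨k, hk⟩, a⟩
    have hk : t k = 0 := hk
    refine ⟨k + s a, ?_⟩
    ext <;> simp [h, hk]

end Split

section Bumby

variable {M N : Type u} [AddCommGroup M] [Module R M] [AddCommGroup N] [Module R N]

lemma bumby {D : Type u} [AddCommGroup D] [Module R D]
    (hD : IsCotorsionModule R D) (v : N →ₗ[R] D) (hv : Function.Injective v)
    (hinv : ∀ ψ : N →ₗ[R] D, ∀ y, ψ y ∈ LinearMap.range v) (hN : IsFlatModule R N)
    (f : M →ₗ[R] N) (r : N →ₗ[R] M) (hrf : ∀ x, r (f x) = x)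
    (g : N →ₗ[R] M) (q : M →ₗ[R] N) (hqg : ∀ x, q (g x) = x) : Nonempty (M ≃ₗ[R] N) := by
  classical
  let X := LinearMap.ker q
  let π : M →ₗ[R] X := (LinearMap.id - g ∘ₗ q).codRestrict (LinearMap.ker q)
    (fun b => by simp [hqg])
  have hπ : ∀ m, (π m : M) = m - g (q m) := fun m => rfl
  have hqX : ∀ x : X, q x = 0 := fun x => x.2
  have hπX : ∀ x : X, π x = x := fun x => Subtype.ext (by rw [hπ, hqX, map_zero, sub_zero])
  have hπg : ∀ y, π (g y) = 0 := fun y => Subtype.ext (by rw [hπ, hqg, sub_self]; rfl)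
  let θ : N →ₗ[R] N := f ∘ₗ g
  let ρ : N →ₗ[R] N := q ∘ₗ r
  have hρθ : ∀ y, ρ (θ y) = y := fun y => by simp [ρ, θ, hrf, hqg]
  have hρf : ∀ x : X, ρ (f x) = 0 := fun x => by simp [ρ, hrf, hqX]
  have hπθ : ∀ y, π (r (θ y)) = 0 := fun y => by simp [θ, hrf, hπg]
  let i₀ : (ℕ →₀ X) →ₗ[R] N := Finsupp.lsum ℕ (fun n => (θ ^ n) ∘ₗ f ∘ₗ X.subtype)
  have hi₀s : ∀ n x, i₀ (Finsupp.single n x) = (θ ^ n) (f x) := fun n x => by simp [i₀]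
  have hρpow : ∀ n y, (ρ ^ n) ((θ ^ n) y) = y := by
    intro n
    induction n with
    | zero => simp
    | succ n ih =>
      intro y
      rw [pow_succ, Module.End.mul_apply, pow_succ', Module.End.mul_apply, hρθ, ih]
  let c : ℕ → N →ₗ[R] X := fun n => π ∘ₗ r ∘ₗ (ρ ^ n)
  have hc : ∀ n p, c n (i₀ p) = p n := by
    intro n p
    induction p using Finsupp.induction_linear with
    | zero => simp
    | add a b ha hb => simp [ha, hb]
    | single k x =>
      rw [hi₀s]
      change π (r ((ρ ^ n) ((θ ^ k) (f x)))) = _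
      rcases lt_trichotomy n k with hlt | rfl | hlt
      · obtain ⟨d, rfl⟩ := Nat.exists_eq_add_of_lt hlt
        rw [show n + d + 1 = n + (d + 1) by ring, pow_add, Module.End.mul_apply, hρpow,
          pow_succ', Module.End.mul_apply, hπθ]
        rw [Finsupp.single_eq_of_ne (by omega)]
      · rw [hρpow, hrf, hπX, Finsupp.single_eq_same]
      · obtain ⟨d, rfl⟩ := Nat.exists_eq_add_of_lt hlt
        rw [show k + d + 1 = (d + 1) + k by ring, pow_add, Module.End.mul_apply, hρpow,
          pow_succ, Module.End.mul_apply, hρf, map_zero, map_zero, map_zero]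
        rw [Finsupp.single_eq_of_ne (by omega)]
  have hi₀ : Function.Injective i₀ := by
    intro a b hab
    ext1 n
    rw [← hc, ← hc, hab]
  have hfl : RelFlat ⊤ (LinearMap.range i₀) := by
    apply relFlat_pure hN
    rintro m n s a ha ⟨y, hy⟩
    choose p hp using ha
    let U : Finset ℕ := Finset.univ.biUnion fun i => (p i).support
    let z : Fin n → (ℕ →₀ X) := fun j => ∑ k ∈ U, Finsupp.single k (c k (y j))
    refine ⟨fun j => i₀ (z j), fun j => ⟨_, rfl⟩, fun i => ?_⟩
    rw [← hp i]
    simp_rw [← map_smul]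
    rw [← map_sum]
    congr 1
    have hz : ∀ j k, z j k = if k ∈ U then c k (y j) else 0 := by
      intro j k
      simp only [z, Finsupp.finsetSum_apply, Finsupp.single_apply]
      simp
    ext1 k
    simp only [Finsupp.finsetSum_apply, Finsupp.smul_apply, hz]
    split_ifs with hk
    · simp_rw [← map_smul]
      rw [← map_sum, hy, ← hp, hc]
    · simp only [smul_zero, Finset.sum_const_zero]
      have : k ∉ (p i).support := fun h => hk (Finset.mem_biUnion.2 ⟨i, Finset.mem_univ _, h⟩)
      exact (Finsupp.notMem_support_iff.1 this).symm
  -- closure properties of the range of `i₀`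
  have hcl1 : ∀ p (x : X), ∃ p', i₀ p' = f (g (i₀ p) + x) := by
    intro p x
    have h1 : ∃ p', i₀ p' = θ (i₀ p) := by
      induction p using Finsupp.induction_linear with
      | zero => exact ⟨0, by simp⟩
      | add a b ha hb =>
        obtain ⟨a', ha⟩ := ha
        obtain ⟨b', hb⟩ := hb
        exact ⟨a' + b', by simp [ha, hb]⟩
      | single k x =>
        exact ⟨Finsupp.single (k + 1) x, by
          rw [hi₀s, hi₀s, pow_succ', Module.End.mul_apply]⟩
    obtain ⟨p', hp'⟩ := h1
    refine ⟨p' + Finsupp.single 0 x, ?_⟩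
    rw [map_add, hp', hi₀s, map_add]
    rfl
  have hcl2 : ∀ p, ∃ p', i₀ p' = ρ (i₀ p) := by
    intro p
    induction p using Finsupp.induction_linear with
    | zero => exact ⟨0, by simp⟩
    | add a b ha hb =>
      obtain ⟨a', ha⟩ := ha
      obtain ⟨b', hb⟩ := hb
      exact ⟨a' + b', by simp [ha, hb]⟩
    | single k x =>
      cases k with
      | zero => exact ⟨0, by rw [hi₀s, map_zero, pow_zero]; exact (hρf x).symm⟩
      | succ k =>
        exact ⟨Finsupp.single k x, by
          rw [hi₀s, hi₀s, pow_succ', Module.End.mul_apply, hρθ]⟩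
  have hcl3 : ∀ p, f (r (i₀ p)) = i₀ p := by
    intro p
    induction p using Finsupp.induction_linear with
    | zero => simp
    | add a b ha hb => simp [ha, hb]
    | single k x =>
      rw [hi₀s]
      cases k with
      | zero => simp [hrf]
      | succ k =>
        rw [pow_succ', Module.End.mul_apply]
        simp [θ, hrf]
  obtain ⟨E, _, _, κ, β, hβ, hmin⟩ := exists_min hD v hv hinv i₀ hi₀ hfl
  -- `X × E ≃ E`
  let a : X × E →ₗ[R] E := (κ ∘ₗ f ∘ₗ X.subtype).coprod (κ ∘ₗ f ∘ₗ g ∘ₗ β)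
  have ha : ∀ x e, a (x, e) = κ (f (g (β e) + x)) := fun x e => by
    simp [a, add_comm]
  let b : E →ₗ[R] X × E := (π ∘ₗ r ∘ₗ β).prod (κ ∘ₗ ρ ∘ₗ β)
  have hb : ∀ e, b e = (π (r (β e)), κ (ρ (β e))) := fun e => rfl
  have hab : Function.Bijective (a ∘ₗ b) := by
    apply hmin
    intro p
    obtain ⟨p', hp'⟩ := hcl2 p
    rw [LinearMap.comp_apply, hb, ha, hβ, ← hp', hβ, hp', hπ]
    congr 1
    conv_rhs => rw [← hcl3 p]
    congr 1
    simp [ρ]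
  have hba : Function.Bijective (b ∘ₗ a) := by
    have hfix : ∀ x p, b (a (x, κ (i₀ p))) = (x, κ (i₀ p)) := by
      intro x p
      obtain ⟨p', hp'⟩ := hcl1 p x
      rw [ha, hβ, ← hp', hb, hβ, hp', hrf, map_add, hπg, hπX, zero_add]
      simp [ρ, hrf, hqg, hqX]
    have hfix0 : ∀ x, b (a (x, 0)) = (x, 0) := fun x => by simpa using hfix x 0
    let d : E →ₗ[R] E := LinearMap.snd R X E ∘ₗ b ∘ₗ a ∘ₗ LinearMap.inr R X E
    have hd : Function.Bijective d := hmin d (fun p => by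
      have := hfix 0 p
      simp only [d, LinearMap.comp_apply, LinearMap.inr_apply]
      rw [this]; rfl)
    have hdec : ∀ x e, (b ∘ₗ a) (x, e) = (x + (b (a (0, e))).1, d e) := by
      intro x e
      have h1 : ((x, e) : X × E) = (x, 0) + (0, e) := by simp
      rw [h1, map_add, LinearMap.comp_apply, LinearMap.comp_apply, hfix0]
      ext <;> simp [d]
    constructor
    · rw [injective_iff_map_eq_zero]
      rintro ⟨x, e⟩ h
      rw [hdec] at h
      have h2 : d e = 0 := congrArg Prod.snd h
      have he : e = 0 := hd.1 (by rw [h2, map_zero])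
      subst he
      have h1 : x + (b (a (0, 0))).1 = 0 := congrArg Prod.fst h
      rw [hfix0] at h1
      simpa using h1
    · rintro ⟨x, e⟩
      obtain ⟨e', rfl⟩ := hd.2 e
      exact ⟨(x - (b (a (0, e'))).1, e'), by rw [hdec]; simp⟩
  have habij : Function.Bijective a :=
    ⟨Function.Injective.of_comp (f := b) hba.1, Function.Surjective.of_comp (g := b) hab.2⟩
  have hκβ : Function.Bijective (κ ∘ₗ β) := hmin _ (fun p => by rw [LinearMap.comp_apply, hβ])
  let eκ := LinearEquiv.ofBijective _ hκβ
  obtain ⟨e1⟩ := retractEquiv β (eκ.symm.toLinearMap ∘ₗ κ) (fun x => eκ.symm_apply_apply x)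
  obtain ⟨e2⟩ := retractEquiv g q hqg
  let e3 := LinearEquiv.ofBijective a habij
  let K := LinearMap.ker (eκ.symm.toLinearMap ∘ₗ κ)
  -- `M ≃ X × N ≃ X × (K × E) ≃ K × (X × E) ≃ K × E ≃ N`
  let e4 : (X × (K × E)) ≃ₗ[R] (K × (X × E)) :=
    (LinearEquiv.prodAssoc R X K E).symm ≪≫ₗ
      ((LinearEquiv.prodComm R X K).prodCongr (LinearEquiv.refl R E)) ≪≫ₗ
      LinearEquiv.prodAssoc R K X E
  exact ⟨e2 ≪≫ₗ ((LinearEquiv.refl R X).prodCongr e1) ≪≫ₗ e4 ≪≫ₗ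
    ((LinearEquiv.refl R K).prodCongr e3) ≪≫ₗ e1.symm⟩

end Bumby

end Helpers

/-- If `M` and `N` are flat modules invariant under endomorphisms of their cotorsion
envelopes and there are pure monomorphisms `M → N` and `N → M`, then `M ≅ N`. -/
theorem stmt12 (M N : Type u) [AddCommGroup M] [Module R M] [AddCommGroup N] [Module R N]
    (hMflat : IsFlatModule R M) (hNflat : IsFlatModule R N)
    (hM : IsCotorsionEndoInvariant R M) (hN : IsCotorsionEndoInvariant R N)
    (f : M →ₗ[R] N) (hf : IsPureMono R f)
    (g : N →ₗ[R] M) (hg : IsPureMono R g) :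
    Nonempty (M ≃ₗ[R] N) := by
  obtain ⟨C, _, _, u, hu, huinv⟩ := hM
  obtain ⟨D, _, _, v, hv, hvinv⟩ := hN
  obtain ⟨F, G, hF, hGF⟩ := env_retract hNflat f hf u hu v hv
  obtain ⟨F', G', hF', hGF'⟩ := env_retract hMflat g hg v hv u hu
  obtain ⟨r, hr⟩ := split_of f g u hu.1 v huinv F G hF hGF F' G' hF' hGF'
  obtain ⟨q, hq⟩ := split_of g f v hv.1 u hvinv F' G' hF' hGF' F G hF hGF
  refine bumby hv.2.1 v hv.1 ?_ hNflat f r hr g q hq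
  intro ψ y
  obtain ⟨φ, hφ⟩ := hv.2.2.1 D hv.2.1 ψ
  obtain ⟨k, hk⟩ := hvinv φ
  refine ⟨k y, ?_⟩
  rw [← hφ, ← hk]
  rfl
end

section
/- Let R be a ring, let M and N be automorphism-invariant right R-modules, and let f : M → N and g : N → M be injective R-linear maps. Then M ≅ N. -/
/-!
Theorem 3.1: Schröder–Bernstein for automorphism-invariant modules.
"Right R-modules" are formalized as Lean `Module R` modules (the theory is
side-symmetric).
-/

universe u

variable (R : Type u) [Ring R]

/-- `E` is an injective `R`-module: for every injective `R`-linear map `i : A → B`, every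
`R`-linear map `A → E` extends to an `R`-linear map `B → E`. -/
def IsInjectiveModule (E : Type u) [AddCommGroup E] [Module R E] : Prop :=
  ∀ (A B : Type u) [AddCommGroup A] [Module R A] [AddCommGroup B] [Module R B]
    (i : A →ₗ[R] B), Function.Injective i →
    ∀ f : A →ₗ[R] E, ∃ g : B →ₗ[R] E, g ∘ₗ i = f

/-- `N` is an essential submodule of `E`: every nonzero submodule of `E` meets `N`
nontrivially. -/
def IsEssentialSubmodule {E : Type u} [AddCommGroup E] [Module R E]
    (N : Submodule R E) : Prop :=
  ∀ K : Submodule R E, K ⊓ N = ⊥ → K = ⊥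

/-- `u : M → E` realizes `E` as an injective envelope of `M`: `E` is injective and `u`
embeds `M` as an essential submodule of `E`. -/
def IsInjectiveEnvelope (M E : Type u) [AddCommGroup M] [Module R M]
    [AddCommGroup E] [Module R E] (u : M →ₗ[R] E) : Prop :=
  IsInjectiveModule R E ∧ Function.Injective u ∧
    IsEssentialSubmodule R (LinearMap.range u)

/-- `M` is automorphism-invariant: `M` (viewed inside an injective envelope `E(M)`)
satisfies `φ(M) ⊆ M` for every automorphism `φ` of `E(M)`. -/
def IsAutomorphismInvariant (M : Type u) [AddCommGroup M] [Module R M] : Prop :=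
  ∃ (E : Type u) (_ : AddCommGroup E) (_ : Module R E) (u : M →ₗ[R] E),
    IsInjectiveEnvelope R M E u ∧
    ∀ φ : E ≃ₗ[R] E, ∀ x : M, φ (u x) ∈ LinearMap.range u

section Aux

variable {R}

/-- Extension of an isomorphism between essential submodules to the injective envelopes. -/
lemma aux_ext {E E' X : Type u} [AddCommGroup E] [Module R E] [AddCommGroup E'] [Module R E']
    [AddCommGroup X] [Module R X] (hE : IsInjectiveModule R E) (hE' : IsInjectiveModule R E')
    (i : X →ₗ[R] E) (hi : Function.Injective i)
    (hi' : IsEssentialSubmodule R (LinearMap.range i))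
    (j : X →ₗ[R] E') (hj : Function.Injective j)
    (hj' : IsEssentialSubmodule R (LinearMap.range j)) :
    ∃ θ : E ≃ₗ[R] E', ∀ x, θ (i x) = j x := by
  obtain ⟨g, hg⟩ := hE' X E i hi j
  have hg' : ∀ x, g (i x) = j x := fun x => LinearMap.congr_fun hg x
  have hk : LinearMap.ker g = ⊥ := by
    apply hi'
    rw [eq_bot_iff]
    rintro _ ⟨h1, x, rfl⟩
    have h1' : g (i x) = 0 := h1
    rw [hg'] at h1'
    have : x = 0 := hj (by simpa using h1')
    simp [this]
  have hginj : Function.Injective g := LinearMap.ker_eq_bot.mp hk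
  obtain ⟨r, hr⟩ := hE E E' g hginj LinearMap.id
  have hr' : ∀ x, r (g x) = x := fun x => LinearMap.congr_fun hr x
  have hkr : LinearMap.ker r = ⊥ := by
    apply hj'
    rw [eq_bot_iff]
    rintro _ ⟨h1, x, rfl⟩
    have h1' : r (j x) = 0 := h1
    rw [← hg', hr'] at h1'
    rw [← hg', h1']
    simp
  have hrinj : Function.Injective r := LinearMap.ker_eq_bot.mp hkr
  refine ⟨LinearEquiv.ofBijective g ⟨hginj, fun y => ⟨r y, hrinj (hr' _)⟩⟩, fun x => hg' x⟩

/-- Zorn complements. -/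
lemma aux_compl {E : Type u} [AddCommGroup E] [Module R E] (B : Submodule R E) :
    ∃ T : Submodule R E, Disjoint B T ∧ IsEssentialSubmodule R (B ⊔ T) := by
  obtain ⟨T, -, hT⟩ := zorn_le_nonempty₀ {T : Submodule R E | Disjoint B T} (by
    intro c hc hch y hy
    refine ⟨sSup c, ?_, fun z hz => le_sSup hz⟩
    exact (hch.directedOn.disjoint_sSup_right).2 (fun b hb => hc hb)) ⊥ disjoint_bot_right
  refine ⟨T, hT.1, fun K hK => ?_⟩
  have h1 : Disjoint B (T ⊔ K) :=
    Disjoint.disjoint_sup_right_of_disjoint_sup_left hT.1 (disjoint_iff.2 (by rwa [inf_comm]))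
  have h2 : K ≤ T := le_sup_right.trans (hT.2 h1 le_sup_left)
  rw [eq_bot_iff, ← hK]
  exact le_inf le_rfl (h2.trans le_sup_right)

/-- Partial shifts of a direct sum of copies of `C`. -/
noncomputable def auxD (C : Type u) [AddCommGroup C] [Module R C] (s : ℕ → ℕ) (χ : ℕ → Bool) :
    (ℕ →₀ C) →ₗ[R] (ℕ →₀ C) :=
  Finsupp.lsum ℕ (fun n => if χ n then Finsupp.lsingle (s n) else 0)

lemma auxD_single (C : Type u) [AddCommGroup C] [Module R C] (s : ℕ → ℕ) (χ : ℕ → Bool)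
    (n : ℕ) (c : C) : auxD (R := R) C s χ (Finsupp.single n c) =
      if χ n then Finsupp.single (s n) c else 0 := by
  unfold auxD
  rw [Finsupp.lsum_single]
  split_ifs <;> simp

lemma auxD_sq (C : Type u) [AddCommGroup C] [Module R C] (s : ℕ → ℕ) (χ : ℕ → Bool)
    (h : ∀ n, χ n = true → χ (s n) = false) (x : ℕ →₀ C) :
    auxD (R := R) C s χ (auxD (R := R) C s χ x) = 0 := by
  have : auxD (R := R) C s χ ∘ₗ auxD (R := R) C s χ = 0 := by
    apply Finsupp.lhom_ext
    intro n c
    rw [LinearMap.comp_apply, auxD_single]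
    split_ifs with h1
    · rw [auxD_single, h n h1]; simp
    · simp
  exact LinearMap.congr_fun this x

/-- Square-zero endomorphisms of an essential submodule extend to endomorphisms preserving
every automorphism-invariant submodule. -/
lemma aux_nil {E Z : Type u} [AddCommGroup E] [Module R E] [AddCommGroup Z] [Module R Z]
    (hE : IsInjectiveModule R E) (i : Z →ₗ[R] E) (hi : Function.Injective i)
    (hi' : IsEssentialSubmodule R (LinearMap.range i)) (a : Z →ₗ[R] Z) (ha : ∀ z, a (a z) = 0)
    (Y : Submodule R E) (hY : ∀ φ : E ≃ₗ[R] E, ∀ y ∈ Y, φ y ∈ Y) :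
    ∃ α : E →ₗ[R] E, (∀ z, α (i z) = i (a z)) ∧ ∀ y ∈ Y, α y ∈ Y := by
  have hinj : Function.Injective (i ∘ₗ (LinearMap.id + a)) := by
    rw [← LinearMap.ker_eq_bot, LinearMap.ker_eq_bot']
    intro z hz
    have h1 : z + a z = 0 := hi (by simpa using hz)
    have h2 : a z = 0 := by
      have := congrArg a h1
      simpa [ha] using this
    simpa [h2] using h1
  have hran : LinearMap.range (i ∘ₗ (LinearMap.id + a)) = LinearMap.range i := by
    apply le_antisymm
    · rintro _ ⟨z, rfl⟩
      exact ⟨z + a z, rfl⟩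
    · rintro _ ⟨z, rfl⟩
      refine ⟨z - a z, ?_⟩
      simp [ha]
  obtain ⟨θ, hθ⟩ := aux_ext hE hE i hi hi' _ hinj (hran ▸ hi')
  refine ⟨θ.toLinearMap - LinearMap.id, fun z => ?_, fun y hy => ?_⟩
  · simp [hθ]
  · exact Y.sub_mem (hY θ y hy) hy

lemma aux_setup {E₁ E₂ : Type u} [AddCommGroup E₁] [Module R E₁] [AddCommGroup E₂] [Module R E₂]
    (h₁ : IsInjectiveModule R E₁) (h₂ : IsInjectiveModule R E₂)
    (F : E₁ →ₗ[R] E₂) (hF : Function.Injective F) (G : E₂ →ₗ[R] E₁) (hG : Function.Injective G) :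
    ∃ (C : Submodule R E₁) (T : Submodule R E₂) (σ : (ℕ →₀ C) →ₗ[R] E₁) (θ : E₁ ≃ₗ[R] E₂),
      (∀ n c, σ (Finsupp.single (n+1) c) = G (F (σ (Finsupp.single n c)))) ∧
      Function.Injective ((F ∘ₗ σ).coprod T.subtype) ∧
      IsEssentialSubmodule R (LinearMap.range ((F ∘ₗ σ).coprod T.subtype)) ∧
      ∀ (f : ℕ →₀ C) (t : T), θ (σ f + G t) = F (σ f) + t := by
  obtain ⟨r, hr⟩ := h₂ E₂ E₁ G hG LinearMap.id
  have hr' : ∀ x, r (G x) = x := fun x => LinearMap.congr_fun hr x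
  let C := LinearMap.ker r
  have hC : ∀ c : C, r c = 0 := fun c => c.2
  let σ : (ℕ →₀ C) →ₗ[R] E₁ := Finsupp.lsum ℕ (fun n => ((G ∘ₗ F) ^ n : Module.End R E₁) ∘ₗ C.subtype)
  have hσ : ∀ n c, σ (Finsupp.single n c) = ((G ∘ₗ F) ^ n : Module.End R E₁) (c : E₁) := by
    intro n c
    simp only [σ, Finsupp.lsum_single]; rfl
  have hσ0 : ∀ c, σ (Finsupp.single 0 c) = c := by intro c; rw [hσ]; simp
  have hσs : ∀ n c, σ (Finsupp.single (n+1) c) = G (F (σ (Finsupp.single n c))) := by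
    intro n c
    rw [hσ, hσ, pow_succ']; rfl
  let K : (ℕ →₀ C) →ₗ[R] (ℕ →₀ C) := auxD (R := R) C Nat.pred (fun n => n != 0)
  have hK : ∀ f n, K f n = f (n+1) := by
    intro f n
    have : Finsupp.lapply n ∘ₗ K = (Finsupp.lapply (n+1) : (ℕ →₀ C) →ₗ[R] C) := by
      apply Finsupp.lhom_ext
      intro m c
      rw [LinearMap.comp_apply, auxD_single]
      rcases m with _ | m <;> simp [Finsupp.single_apply]
    exact LinearMap.congr_fun this f
  have hσK : ∀ f, σ f = f 0 + G (F (σ (K f))) := by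
    intro f
    have : σ = C.subtype ∘ₗ Finsupp.lapply 0 + G ∘ₗ F ∘ₗ σ ∘ₗ K := by
      apply Finsupp.lhom_ext
      intro m c
      simp only [LinearMap.add_apply, LinearMap.comp_apply, K, auxD_single]
      rcases m with _ | m
      · simp [hσ0]
      · simp [hσs]
    exact LinearMap.congr_fun this f
  have hrσ : ∀ f, r (σ f) = F (σ (K f)) := by
    intro f
    rw [hσK, map_add, hC, hr', zero_add]
  have hσ1 : ∀ n f, σ f = 0 → f n = 0 := by
    intro n
    induction n with
    | zero =>
      intro f hf
      have h1 := hrσ f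
      rw [hf, map_zero] at h1
      have h2 := hσK f
      rw [← h1, hf] at h2
      apply Subtype.ext
      simpa using h2.symm
    | succ n ih =>
      intro f hf
      have h1 := hrσ f
      rw [hf, map_zero] at h1
      rw [← hK]
      exact ih _ (hF (by rw [← h1, map_zero]))
  have hσi : ∀ f, σ f = 0 → f = 0 := fun f hf => Finsupp.ext fun n => hσ1 n f hf
  obtain ⟨T, hT, hTe⟩ := aux_compl (LinearMap.range (F ∘ₗ σ))
  have hT' : ∀ f (t : T), F (σ f) + t = 0 → f = 0 ∧ t = 0 := by
    intro f t h
    have h1 : F (σ f) = 0 := by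
      refine Submodule.disjoint_def.1 hT _ ⟨f, rfl⟩ ?_
      rw [eq_neg_of_add_eq_zero_left h]
      exact T.neg_mem t.2
    refine ⟨hσi f (hF (by rw [h1, map_zero])), ?_⟩
    rw [h1, zero_add] at h
    exact Subtype.ext h
  have hjinj : Function.Injective ((F ∘ₗ σ).coprod T.subtype) := by
    rw [← LinearMap.ker_eq_bot, LinearMap.ker_eq_bot']
    rintro ⟨f, t⟩ h
    obtain ⟨h1, h2⟩ := hT' f t (by simpa using h)
    rw [h1, h2]; rfl
  have hjess : IsEssentialSubmodule R (LinearMap.range ((F ∘ₗ σ).coprod T.subtype)) := by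
    rw [LinearMap.range_coprod, Submodule.range_subtype]
    exact hTe
  have hiinj : Function.Injective (σ.coprod (G ∘ₗ T.subtype)) := by
    rw [← LinearMap.ker_eq_bot, LinearMap.ker_eq_bot']
    rintro ⟨f, t⟩ h
    have h0 : σ f + G t = 0 := by simpa using h
    have h1 := congrArg r h0
    rw [map_add, hrσ, hr', map_zero] at h1
    obtain ⟨h2, h3⟩ := hT' _ _ h1
    rw [h3] at h0
    have h4 : σ f = 0 := by simpa using h0
    rw [h3, hσi f h4]; rfl
  have hiess : IsEssentialSubmodule R (LinearMap.range (σ.coprod (G ∘ₗ T.subtype))) := by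
    intro L hL
    have hCi : ∀ c : C, (c : E₁) ∈ LinearMap.range (σ.coprod (G ∘ₗ T.subtype)) := by
      intro c
      exact ⟨(Finsupp.single 0 c, 0), by simp [hσ0]⟩
    have hBi : ∀ y ∈ LinearMap.range ((F ∘ₗ σ).coprod T.subtype),
        G y ∈ LinearMap.range (σ.coprod (G ∘ₗ T.subtype)) := by
      rintro _ ⟨⟨f, t⟩, rfl⟩
      refine ⟨(auxD (R := R) C Nat.succ (fun _ => true) f, t), ?_⟩
      have : σ ∘ₗ auxD (R := R) C Nat.succ (fun _ => true) = G ∘ₗ F ∘ₗ σ := by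
        apply Finsupp.lhom_ext
        intro m c
        simp [auxD_single, hσs]
      have := LinearMap.congr_fun this f
      simp at this
      simp [this]
    have hLr : L.map r = ⊥ := by
      apply hjess
      rw [eq_bot_iff]
      rintro _ ⟨⟨x, hx, rfl⟩, hB⟩
      have h1 : x ∈ LinearMap.range (σ.coprod (G ∘ₗ T.subtype)) := by
        have h2 : x = (x - G (r x)) + G (r x) := by abel
        rw [h2]
        refine Submodule.add_mem _ (hCi ⟨x - G (r x), ?_⟩) (hBi _ hB)
        simp [C, LinearMap.mem_ker, hr']
      have h3 : x ∈ L ⊓ LinearMap.range (σ.coprod (G ∘ₗ T.subtype)) := ⟨hx, h1⟩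
      rw [hL] at h3
      rw [(Submodule.mem_bot R).1 h3]; simp
    rw [eq_bot_iff, ← hL]
    intro x hx
    refine ⟨hx, hCi ⟨x, ?_⟩⟩
    have : r x ∈ L.map r := ⟨x, hx, rfl⟩
    rw [hLr] at this
    exact this
  obtain ⟨θ, hθ⟩ := aux_ext h₁ h₂ _ hiinj hiess _ hjinj hjess
  refine ⟨C, T, σ, θ, hσs, hjinj, hjess, fun f t => ?_⟩
  simpa using hθ (f, t)

lemma aux_main {E : Type u} [AddCommGroup E] [Module R E] (hE : IsInjectiveModule R E)
    (X Y : Submodule R E)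
    (hY : ∀ φ : E ≃ₗ[R] E, ∀ y ∈ Y, φ y ∈ Y) (F : E →ₗ[R] E) (hF : Function.Injective F)
    (hXY : ∀ x ∈ X, F x ∈ Y) : X ≤ Y := by
  obtain ⟨C, T, σ, θ, hσ, hinj, hess, hθ⟩ :=
    aux_setup hE hE LinearMap.id Function.injective_id F hF
  simp only [LinearMap.id_apply, LinearMap.id_comp] at hσ hinj hess hθ
  have key : ∀ (s : ℕ → ℕ) (χ : ℕ → Bool) (_ : ∀ n, χ n = true → χ (s n) = false),
      ∃ α : E →ₗ[R] E, (∀ f, α (σ f) = σ (auxD (R := R) C s χ f)) ∧ (∀ t : T, α t = 0) ∧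
        ∀ y ∈ Y, α y ∈ Y := by
    intro s χ h
    obtain ⟨α, h1, h2⟩ := aux_nil hE _ hinj hess
      ((LinearMap.inl R _ T) ∘ₗ auxD (R := R) C s χ ∘ₗ (LinearMap.fst R _ T)) (by
        intro z
        simp [auxD_sq C s χ h]) Y hY
    refine ⟨α, fun f => ?_, fun t => ?_, h2⟩
    · simpa using h1 (f, 0)
    · simpa using h1 (0, t)
  obtain ⟨a, ha, ha0, haY⟩ := key Nat.succ (fun n => n % 2 == 0) (by intro n; simp; omega)
  obtain ⟨b, hb, hb0, hbY⟩ := key Nat.succ (fun n => n % 2 == 1) (by intro n; simp; omega)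
  obtain ⟨c, hc, hc0, hcY⟩ := key Nat.pred (fun n => n % 2 == 0 && n != 0)
    (by intro n; simp; omega)
  obtain ⟨d, hd, hd0, hdY⟩ := key Nat.pred (fun n => n % 2 == 1) (by intro n; simp; omega)
  have hab : ∀ f, a (σ f) + b (σ f) = F (σ f) := by
    intro f
    have : a ∘ₗ σ + b ∘ₗ σ = F ∘ₗ σ := by
      apply Finsupp.lhom_ext
      intro n x
      simp only [LinearMap.add_apply, LinearMap.comp_apply, ha, hb, auxD_single, ← hσ]
      rcases Nat.mod_two_eq_zero_or_one n with h | h <;> simp [h]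
    exact LinearMap.congr_fun this f
  have hcd : ∀ f, c (F (σ f)) + d (F (σ f)) = σ f := by
    intro f
    have : c ∘ₗ F ∘ₗ σ + d ∘ₗ F ∘ₗ σ = σ := by
      apply Finsupp.lhom_ext
      intro n x
      simp only [LinearMap.add_apply, LinearMap.comp_apply, ← hσ, hc, hd, auxD_single]
      rcases Nat.mod_two_eq_zero_or_one n with h | h
      · have h' : (n+1) % 2 = 1 := by omega
        simp [h']
      · have h' : (n+1) % 2 = 0 := by omega
        simp [h']
    exact LinearMap.congr_fun this f
  have hFσ : ∀ f, ∃ f', F (σ f) = σ f' := by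
    intro f
    exact ⟨auxD (R := R) C Nat.succ (fun n => n % 2 == 0) f + auxD (R := R) C Nat.succ (fun n => n % 2 == 1) f, by
      rw [← hab, ha, hb, map_add]⟩
  have hθσ : ∀ f, θ (σ f) = σ f := fun f => by simpa using hθ f 0
  have hθT : ∀ t : T, θ (F t) = t := fun t => by simpa using hθ 0 t
  let W : E →ₗ[R] E := (c + d) + LinearMap.id - (c + d) ∘ₗ (a + b)
  have hWY : ∀ y ∈ Y, W y ∈ Y := by
    intro y hy
    have h1 : a y + b y ∈ Y := Y.add_mem (haY y hy) (hbY y hy)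
    exact Y.sub_mem (Y.add_mem (Y.add_mem (hcY y hy) (hdY y hy)) hy)
      (Y.add_mem (hcY _ h1) (hdY _ h1))
  have hW1 : ∀ f, W (θ (F (σ f))) = σ f := by
    intro f
    obtain ⟨f', hf'⟩ := hFσ f
    have h1 : c (σ f') + d (σ f') = σ f := by rw [← hf', hcd]
    have h2 := hcd f'
    have h3 := hab f'
    rw [hf', hθσ]
    simp only [W, LinearMap.sub_apply, LinearMap.add_apply, LinearMap.comp_apply,
      LinearMap.id_apply, h3, h1, h2]
    abel
  have hW2 : ∀ t : T, W (θ (F t)) = t := by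
    intro t
    rw [hθT]
    simp [W, ha0, hb0, hc0, hd0]
  let V : E →ₗ[R] E := W ∘ₗ θ.toLinearMap ∘ₗ F
  have hV : ∀ z, V (σ.coprod T.subtype z) = σ.coprod T.subtype z := by
    rintro ⟨f, t⟩
    simp [V, hW1, hW2]
  -- `V` is an automorphism
  have hVi : Function.Injective V := by
    rw [← LinearMap.ker_eq_bot]
    apply hess
    rw [eq_bot_iff]
    rintro _ ⟨h1, z, rfl⟩
    have h1' : V _ = 0 := h1
    rw [hV] at h1'
    rw [h1']; simp
  obtain ⟨q, hq⟩ := hE E E V hVi LinearMap.id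
  have hq' : ∀ x, q (V x) = x := fun x => LinearMap.congr_fun hq x
  have hqi : Function.Injective q := by
    rw [← LinearMap.ker_eq_bot]
    apply hess
    rw [eq_bot_iff]
    rintro _ ⟨h1, z, rfl⟩
    have h1' : q _ = 0 := h1
    rw [← hV, hq'] at h1'
    rw [h1']; simp
  let Q : E ≃ₗ[R] E := LinearEquiv.ofBijective q ⟨hqi, fun x => ⟨V x, hq' x⟩⟩
  intro x hx
  have h1 : V x ∈ Y := hWY _ (hY θ _ (hXY x hx))
  have h2 := hY Q _ h1
  have h3 : Q (V x) = x := hq' x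
  rwa [h3] at h2

lemma aux_extend {M N E E' : Type u} [AddCommGroup M] [Module R M] [AddCommGroup N] [Module R N]
    [AddCommGroup E] [Module R E] [AddCommGroup E'] [Module R E']
    (i : M →ₗ[R] E) (hi : IsInjectiveEnvelope R M E i)
    (j : N →ₗ[R] E') (hj : IsInjectiveEnvelope R N E' j)
    (f : M →ₗ[R] N) (hf : Function.Injective f) :
    ∃ F : E →ₗ[R] E', Function.Injective F ∧ ∀ x, F (i x) = j (f x) := by
  obtain ⟨F, hF⟩ := hj.1 M E i hi.2.1 (j ∘ₗ f)
  have hF' : ∀ x, F (i x) = j (f x) := fun x => LinearMap.congr_fun hF x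
  refine ⟨F, ?_, hF'⟩
  rw [← LinearMap.ker_eq_bot]
  apply hi.2.2
  rw [eq_bot_iff]
  rintro _ ⟨h1, x, rfl⟩
  have h1' : F (i x) = 0 := h1
  rw [hF'] at h1'
  have h2 : x = 0 := hf (hj.2.1 (by simpa using h1'))
  simp [h2]

end Aux

/-- **Theorem 3.1.** If `M` and `N` are automorphism-invariant and there are injective
`R`-linear maps `f : M → N` and `g : N → M`, then `M ≅ N`. -/
theorem stmt13 (M N : Type u) [AddCommGroup M] [Module R M] [AddCommGroup N] [Module R N]
    (hM : IsAutomorphismInvariant R M) (hN : IsAutomorphismInvariant R N)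
    (f : M →ₗ[R] N) (hf : Function.Injective f)
    (g : N →ₗ[R] M) (hg : Function.Injective g) :
    Nonempty (M ≃ₗ[R] N) := by
  obtain ⟨E₁, _, _, i, hi, hiM⟩ := hM
  obtain ⟨E₂, _, _, j, hj, hjN⟩ := hN
  obtain ⟨F, hF, hFx⟩ := aux_extend i hi j hj f hf
  obtain ⟨G, hG, hGx⟩ := aux_extend j hj i hi g hg
  obtain ⟨-, -, -, θ, -⟩ := aux_setup hi.1 hj.1 F hF G hG
  have hX : ∀ φ : E₁ ≃ₗ[R] E₁, ∀ y ∈ LinearMap.range i, φ y ∈ LinearMap.range i := by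
    rintro φ _ ⟨x, rfl⟩
    exact hiM φ x
  have hY : ∀ φ : E₁ ≃ₗ[R] E₁, ∀ y ∈ LinearMap.range (θ.symm.toLinearMap ∘ₗ j),
      φ y ∈ LinearMap.range (θ.symm.toLinearMap ∘ₗ j) := by
    rintro φ _ ⟨x, rfl⟩
    obtain ⟨y, hy⟩ := hjN ((θ.symm.trans φ).trans θ) x
    refine ⟨y, ?_⟩
    simp [hy]
  have h1 : LinearMap.range i ≤ LinearMap.range (θ.symm.toLinearMap ∘ₗ j) := by
    refine aux_main hi.1 _ _ hY (θ.symm.toLinearMap ∘ₗ F) (θ.symm.injective.comp hF) ?_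
    rintro _ ⟨x, rfl⟩
    exact ⟨f x, by simp [hFx]⟩
  have h2 : LinearMap.range (θ.symm.toLinearMap ∘ₗ j) ≤ LinearMap.range i := by
    refine aux_main hi.1 _ _ hX (G ∘ₗ θ.toLinearMap) (hG.comp θ.injective) ?_
    rintro _ ⟨x, rfl⟩
    exact ⟨g x, by simp [hGx]⟩
  exact ⟨(LinearEquiv.ofInjective i hi.2.1).trans
    ((LinearEquiv.ofEq _ _ (le_antisymm h1 h2)).trans
      (LinearEquiv.ofInjective (θ.symm.toLinearMap ∘ₗ j) (θ.symm.injective.comp hj.2.1)).symm)⟩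
end

section
/- Let R be a ring, let M be an automorphism-invariant right R-module, let N be a right R-module, and let f : M → N and g : N → M be injective R-linear maps. Then f(M) is a direct summand of N; that is, there exists a submodule H of N with N = H ⊕ f(M). -/
/-!
Theorem 3.1: Schröder–Bernstein for automorphism-invariant modules.
"Right R-modules" are formalized as Lean `Module R` modules (the theory is
side-symmetric).
-/

universe u

variable (R : Type u) [Ring R]

theorem sb_sq {A : Type u} [Ring A] (T : Subring A) (hT : ∀ x : A, IsUnit x → x ∈ T)
    (q : A) (hq : q * q = 0) : q ∈ T := by
  have h1 : IsUnit (1 + q) := by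
    refine ⟨⟨1 + q, 1 - q, ?_, ?_⟩, rfl⟩
    · have : (1 + q) * (1 - q) = 1 - q * q := by noncomm_ring
      rw [this, hq, sub_zero]
    · have : (1 - q) * (1 + q) = 1 - q * q := by noncomm_ring
      rw [this, hq, sub_zero]
  have := T.sub_mem (hT _ h1) T.one_mem
  simpa using this

theorem sb_ideal {A : Type u} [Ring A] (T : Subring A) (hT : ∀ x : A, IsUnit x → x ∈ T)
    (e a b : A) (hee : e * e = e) (hba : b * a = e) (hea : e * a = 0) (hae : a * e = a)
    (hbe : b * e = 0) (heb : e * b = b) (x y : A) : x * e * y ∈ T := by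
  have hmid : ∀ x, e * x * e ∈ T := by
    intro x
    have : e * x * e = (e * x * b) * a := by rw [mul_assoc _ b a, hba]
    rw [this]
    refine T.mul_mem (sb_sq T hT _ ?_) (sb_sq T hT _ ?_)
    · have : e * x * b * (e * x * b) = e * x * (b * e) * x * b := by noncomm_ring
      rw [this, hbe]; simp
    · have : a * a = a * (e * a) := by rw [← mul_assoc, hae]
      rw [this, hea, mul_zero]
  have hl : x * e ∈ T := by
    have : x * e = e * x * e + (1 - e) * x * e := by noncomm_ring
    rw [this]
    refine T.add_mem (hmid x) (sb_sq T hT _ ?_)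
    have : (1 - e) * x * e * ((1 - e) * x * e) = (1 - e) * x * (e - e * e) * x * e := by
      noncomm_ring
    rw [this, hee]; simp
  have hr : e * y ∈ T := by
    have : e * y = e * y * e + e * y * (1 - e) := by noncomm_ring
    rw [this]
    refine T.add_mem (hmid y) (sb_sq T hT _ ?_)
    have : e * y * (1 - e) * (e * y * (1 - e)) = e * y * (e - e * e) * y * (1 - e) := by
      noncomm_ring
    rw [this, hee]; simp
  have : x * e * y = (x * e) * (e * y) := by
    rw [mul_assoc x e (e * y), ← mul_assoc e e y, hee, mul_assoc]
  rw [this]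
  exact T.mul_mem hl hr

/-- Elementwise essentiality. -/
def SbEss {E : Type u} [AddCommGroup E] [Module R E] (L F : Submodule R E) : Prop :=
  ∀ x ∈ F, x ≠ 0 → ∃ r : R, r • x ∈ L ∧ r • x ≠ 0

variable {R}

theorem sbEss_of {E : Type u} [AddCommGroup E] [Module R E] {L F : Submodule R E}
    (h : ∀ X : Submodule R E, X ≤ F → X ⊓ L = ⊥ → X = ⊥) : SbEss R L F := by
  intro x hx hx0
  by_contra hc
  push Not at hc
  have := h (Submodule.span R {x}) (by simpa using hx) (by
    rw [eq_bot_iff]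
    rintro y ⟨hy1, hy2⟩
    obtain ⟨r, rfl⟩ := Submodule.mem_span_singleton.1 hy1
    exact hc r hy2)
  exact hx0 (by simpa using this)

theorem sb_maxdisj {E : Type u} [AddCommGroup E] [Module R E] (L C0 : Submodule R E)
    (h0 : C0 ⊓ L = ⊥) : ∃ C : Submodule R E, C0 ≤ C ∧ C ⊓ L = ⊥ ∧
      ∀ X : Submodule R E, C ≤ X → X ⊓ L = ⊥ → X = C := by
  obtain ⟨C, h1, h2⟩ := zorn_le_nonempty₀ {C : Submodule R E | C ⊓ L = ⊥} (by
    intro c hc hch y hy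
    refine ⟨sSup c, ?_, fun z hz => le_sSup hz⟩
    show sSup c ⊓ L = ⊥
    rw [eq_bot_iff]
    rintro z ⟨hz1, hz2⟩
    obtain ⟨D, hD, hzD⟩ := (Submodule.mem_sSup_of_directed ⟨y, hy⟩ hch.directedOn).1 hz1
    have : D ⊓ L = ⊥ := hc hD
    rw [← this]
    exact ⟨hzD, hz2⟩) C0 h0
  exact ⟨C, h1, h2.1, fun X hX hXL => le_antisymm (h2.2 hXL hX) hX⟩

/-- Injective hulls inside an injective module. -/
theorem sb_hull {E : Type u} [AddCommGroup E] [Module R E] (hE : IsInjectiveModule R E)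
    (L : Submodule R E) : ∃ e : Module.End R E, e * e = e ∧ (∀ x ∈ L, e x = x) ∧
      SbEss R L (LinearMap.range e) := by
  obtain ⟨C, -, hCL, hCmax⟩ := sb_maxdisj L ⊥ (by simp)
  obtain ⟨F, hLF, hFC, hFmax⟩ := sb_maxdisj C L (by rw [inf_comm]; exact hCL)
  have hCmax' : ∀ X : Submodule R E, C ≤ X → X ⊓ F = ⊥ → X = C := fun X h1 h2 =>
    hCmax X h1 (by rw [eq_bot_iff, ← h2]; exact inf_le_inf_left _ hLF)
  let i : (F × C) →ₗ[R] E := LinearMap.coprod F.subtype C.subtype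
  have hi : Function.Injective i := by
    rw [← LinearMap.ker_eq_bot, eq_bot_iff]
    rintro ⟨⟨x, hx⟩, ⟨y, hy⟩⟩ h
    have h' : x + y = 0 := by simpa [i] using h
    have hxy : x = -y := eq_neg_of_add_eq_zero_left h'
    have : x ∈ F ⊓ C := ⟨hx, by rw [hxy]; exact C.neg_mem hy⟩
    rw [hFC] at this
    have hx0 : x = 0 := by simpa using this
    have hy0 : y = 0 := by simpa [hx0] using h'
    subst hx0 hy0
    rfl
  obtain ⟨e, he⟩ := hE _ _ i hi (F.subtype ∘ₗ LinearMap.fst R F C)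
  have heF : ∀ x ∈ F, e x = x := fun x hx => by
    simpa [i] using LinearMap.congr_fun he (⟨x, hx⟩, 0)
  have heC : ∀ x ∈ C, e x = 0 := fun x hx => by
    simpa [i] using LinearMap.congr_fun he (0, ⟨x, hx⟩)
  have hX : Submodule.comap e C = C := by
    refine hCmax' _ (fun x hx => ?_) ?_
    · simp [heC x hx]
    · rw [eq_bot_iff, ← hFC]
      rintro x ⟨h1, h2⟩
      refine ⟨h2, ?_⟩
      have h1' : e x ∈ C := h1
      rwa [heF x h2] at h1'
  have hr : LinearMap.range e = F := by
    refine hFmax _ (fun x hx => ⟨x, heF x hx⟩) ?_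
    rw [eq_bot_iff]
    rintro _ ⟨⟨x, rfl⟩, h2⟩
    have : x ∈ Submodule.comap e C := h2
    rw [hX] at this
    simp [heC x this]
  refine ⟨e, ?_, fun x hx => heF x (hLF hx), ?_⟩
  · ext x
    exact heF _ (hr ▸ ⟨x, rfl⟩)
  · rw [hr]
    refine sbEss_of fun Y hY hYL => ?_
    have : C ⊔ Y = C := by
      refine hCmax _ le_sup_left ?_
      rw [eq_bot_iff, ← hYL]
      rintro z ⟨hz, hzL⟩
      obtain ⟨c, hc, y, hy, rfl⟩ := Submodule.mem_sup.1 hz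
      have hcF : c ∈ F ⊓ C := ⟨by simpa using F.sub_mem (hLF hzL) (hY hy), hc⟩
      rw [hFC] at hcF
      have hc0 : c = 0 := by simpa using hcF
      subst hc0
      exact ⟨by simpa using hy, hzL⟩
    have hYC : Y ≤ C := by rw [← this]; exact le_sup_right
    rw [eq_bot_iff, ← hFC]
    exact le_inf hY hYC

/-- Partial sums `K + s²K + s⁴K + ...`. -/
def sbA {E : Type u} [AddCommGroup E] [Module R E] (s : Module.End R E) (K : Submodule R E) :
    ℕ → Submodule R E
  | 0 => ⊥
  | n + 1 => K ⊔ (sbA s K n).map (s * s)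

theorem sb_L1 {E : Type u} [AddCommGroup E] [Module R E] (s t : Module.End R E)
    (hts : ∀ x, t (s x) = x) : ∃ L : Submodule R E,
      (∀ x, t x = 0 → x ∈ L) ∧ (∀ x ∈ L, s (s x) ∈ L) ∧ (∀ x ∈ L, ∃ y ∈ L, t x = s y) ∧
      (∀ x ∈ L, ∀ y ∈ L, x = s y → x = 0) := by
  set K := LinearMap.ker t with hK
  have hmono : Monotone (sbA s K) := by
    refine monotone_nat_of_le_succ fun n => ?_
    induction n with
    | zero => exact bot_le
    | succ n ih => exact sup_le_sup_left (Submodule.map_mono ih) _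
  have hmem : ∀ x, x ∈ (⨆ n, sbA s K n) ↔ ∃ n, x ∈ sbA s K n := fun x =>
    Submodule.mem_iSup_of_directed _ hmono.directed_le
  have hdec : ∀ n, ∀ x ∈ sbA s K n, ∃ y ∈ sbA s K (n - 1), t x = s y := by
    intro n x hx
    cases n with
    | zero =>
      have : x = 0 := by simpa [sbA] using hx
      exact ⟨0, Submodule.zero_mem _, by simp [this]⟩
    | succ n =>
      obtain ⟨k, hk, z, ⟨y, hy, rfl⟩, rfl⟩ := Submodule.mem_sup.1 hx
      have hk' : t k = 0 := hk
      exact ⟨y, hy, by simp [hk', hts]⟩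
  have hdec' : ∀ x ∈ (⨆ n, sbA s K n), ∃ y ∈ (⨆ n, sbA s K n), t x = s y := by
    intro x hx
    obtain ⟨n, hn⟩ := (hmem x).1 hx
    obtain ⟨y, hy, h⟩ := hdec n x hn
    exact ⟨y, (hmem y).2 ⟨_, hy⟩, h⟩
  refine ⟨⨆ n, sbA s K n, ?_, ?_, hdec', ?_⟩
  · intro x hx
    exact (hmem x).2 ⟨1, Submodule.mem_sup_left hx⟩
  · intro x hx
    obtain ⟨n, hn⟩ := (hmem x).1 hx
    exact (hmem _).2 ⟨n + 1, Submodule.mem_sup_right ⟨x, hn, rfl⟩⟩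
  · have key : ∀ n, ∀ x ∈ sbA s K n, ∀ y ∈ (⨆ n, sbA s K n), x = s y → x = 0 := by
      intro n
      induction n with
      | zero => intro x hx _ _ _; simpa [sbA] using hx
      | succ n ih =>
        intro x hx y hy hxy
        obtain ⟨x', hx', h1⟩ := hdec _ x hx
        obtain ⟨y', hy', h2⟩ := hdec' y hy
        have h3 : y = s x' := by rw [← h1, hxy, hts]
        have h4 : x' = s y' := by rw [← h2, h3, hts]
        have h5 := ih x' hx' y' hy' h4
        rw [hxy, h3, h5]; simp
    intro x hx
    obtain ⟨n, hn⟩ := (hmem x).1 hx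
    exact key n x hn

theorem sb_main {E : Type u} [AddCommGroup E] [Module R E] (hE : IsInjectiveModule R E)
    (T : Subring (Module.End R E)) (hT : ∀ x : Module.End R E, IsUnit x → x ∈ T)
    (s t : Module.End R E) (hts : t * s = 1) : t ∈ T := by
  have hts' : ∀ x, t (s x) = x := fun x => LinearMap.congr_fun hts x
  have sinj : ∀ x, s x = 0 → x = 0 := fun x hx => by rw [← hts' x, hx, map_zero]
  obtain ⟨L1, hK1, hss1, ht1, hd1⟩ := sb_L1 s t hts'
  obtain ⟨e1, he1, hfix1, hess1⟩ := sb_hull hE L1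
  have he1' : ∀ x, e1 (e1 x) = e1 x := fun x => LinearMap.congr_fun he1 x
  have hr1 : ∀ x ∈ LinearMap.range e1, e1 x = x := by rintro _ ⟨x, rfl⟩; exact he1' x
  have hdF : ∀ x, e1 (s (e1 x)) = s (e1 x) → e1 x = 0 := by
    intro x hx
    by_contra hne
    obtain ⟨r, hr, hr0⟩ := hess1 (e1 x) ⟨x, rfl⟩ hne
    have h1 : s (r • e1 x) ∈ LinearMap.range e1 := ⟨s (r • e1 x), by simp [hx]⟩
    obtain ⟨r', hr', hr0'⟩ := hess1 _ h1 (fun h => hr0 (sinj _ h))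
    exact hr0' (hd1 _ hr' (r' • r • e1 x) (L1.smul_mem _ hr) (by simp))
  obtain ⟨v0, hv0⟩ := hE (LinearMap.range e1) E
    (((1 - e1) * s) ∘ₗ (LinearMap.range e1).subtype) (by
      rw [← LinearMap.ker_eq_bot, eq_bot_iff]
      rintro ⟨_, ⟨x, rfl⟩⟩ h
      have h' : s (e1 x) - e1 (s (e1 x)) = 0 := by simpa using h
      have := hdF x (sub_eq_zero.1 h').symm
      exact Subtype.ext this) (LinearMap.range e1).subtype
  have hv : v0 * ((1 - e1) * s) * e1 = e1 := by
    ext x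
    exact LinearMap.congr_fun hv0 ⟨e1 x, ⟨x, rfl⟩⟩
  set a : Module.End R E := (1 - e1) * s * e1 with ha
  set b : Module.End R E := e1 * v0 * (1 - e1) with hb
  have hnn : (1 - e1) * (1 - e1) = 1 - e1 := by
    have : (1 - e1) * (1 - e1) = 1 - e1 - (e1 - e1 * e1) := by noncomm_ring
    rw [this, he1]; simp
  have hen : e1 * (1 - e1) = 0 := by rw [mul_sub, he1]; simp
  have hne : (1 - e1) * e1 = 0 := by rw [sub_mul, he1]; simp
  have hba : b * a = e1 := by
    have : b * a = e1 * (v0 * (((1 - e1) * (1 - e1)) * s) * e1) := by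
      rw [ha, hb]; simp only [mul_assoc]
    rw [this, hnn, hv, he1]
  have hea : e1 * a = 0 := by rw [ha, ← mul_assoc, ← mul_assoc, hen]; simp
  have hae : a * e1 = a := by rw [ha, mul_assoc, he1]
  have hbe : b * e1 = 0 := by rw [hb, mul_assoc, hne, mul_zero]
  have heb : e1 * b = b := by rw [hb, ← mul_assoc, ← mul_assoc, he1]
  have hI1 := sb_ideal T hT e1 a b he1 hba hea hae hbe heb
  set e : Module.End R E := e1 + a * b with hedef
  have hI : ∀ x y, x * e * y ∈ T := by
    intro x y
    have : x * e * y = x * e1 * y + (x * a) * e1 * (b * y) := by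
      rw [hedef, mul_add, add_mul]
      congr 1
      rw [mul_assoc x a e1, hae]; simp only [mul_assoc]
    rw [this]
    exact T.add_mem (hI1 _ _) (hI1 _ _)
  have hee : e * e = e := by
    have : e * e = e1 * e1 + (e1 * a) * b + a * (b * e1) + a * (b * a) * b := by
      rw [hedef]; noncomm_ring
    rw [this, he1, hea, hbe, hba, hae]; simp [hedef]
  have hee' : ∀ x, e (e x) = e x := fun x => LinearMap.congr_fun hee x
  have hee1 : ∀ x, e (e1 x) = e1 x := by
    have : e * e1 = e1 := by rw [hedef, add_mul, he1, mul_assoc, hbe]; simp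
    exact fun x => LinearMap.congr_fun this x
  have hese1 : ∀ x, e (s (e1 x)) = s (e1 x) := by
    have h1 : e * a = a := by
      rw [hedef, add_mul, hea, mul_assoc, hba, hae, zero_add]
    have h2 : s * e1 = a + e1 * (s * e1) := by rw [ha]; noncomm_ring
    have h3 : e * e1 = e1 := by rw [hedef, add_mul, he1, mul_assoc, hbe]; simp
    have : e * (s * e1) = s * e1 := by
      rw [h2, mul_add, h1, ← mul_assoc e e1, h3]
    exact fun x => LinearMap.congr_fun this x
  have heF : ∀ x, ∃ y z, e x = e1 y + s (e1 z) := by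
    intro x
    refine ⟨x - s (e1 (b x)), b x, ?_⟩
    simp [hedef, ha]
    abel
  set L : Submodule R E := L1 ⊔ L1.map s with hL
  have hKL : ∀ x, t x = 0 → x ∈ L := fun x hx => Submodule.mem_sup_left (hK1 x hx)
  have hsL : ∀ x ∈ L, s x ∈ L := by
    intro x hx
    obtain ⟨y, hy, _, ⟨z, hz, rfl⟩, rfl⟩ := Submodule.mem_sup.1 hx
    rw [map_add]
    exact L.add_mem (Submodule.mem_sup_right ⟨y, hy, rfl⟩) (Submodule.mem_sup_left (hss1 z hz))
  have htL : ∀ x ∈ L, t x ∈ L := by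
    intro x hx
    obtain ⟨y, hy, _, ⟨z, hz, rfl⟩, rfl⟩ := Submodule.mem_sup.1 hx
    rw [map_add, hts']
    obtain ⟨w, hw, h⟩ := ht1 y hy
    rw [h]
    exact L.add_mem (Submodule.mem_sup_right ⟨w, hw, rfl⟩) (Submodule.mem_sup_left hz)
  have hfix : ∀ x ∈ L, e x = x := by
    intro x hx
    obtain ⟨y, hy, _, ⟨z, hz, rfl⟩, rfl⟩ := Submodule.mem_sup.1 hx
    have h1 := hee1 y
    have h2 := hese1 z
    rw [hfix1 y hy] at h1
    rw [hfix1 z hz] at h2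
    rw [map_add, h1, h2]
  have hess : SbEss R L (LinearMap.range e) := by
    rintro _ ⟨x, rfl⟩ hx0
    obtain ⟨y, z, hyz⟩ := heF x
    rw [hyz] at hx0 ⊢
    have hdis : ∀ y z, e1 y + s (e1 z) = 0 → e1 y = 0 ∧ e1 z = 0 := by
      intro y z h
      have h1 : s (e1 z) = e1 (-y) := by rw [map_neg]; exact eq_neg_of_add_eq_zero_right h
      have h2 : e1 z = 0 := hdF z (by rw [h1, he1'])
      rw [h2] at h
      exact ⟨by simpa using h, h2⟩
    have step1 : ∃ r : R, r • e1 y ∈ L1 ∧ r • (e1 y + s (e1 z)) ≠ 0 := by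
      by_cases hy : e1 y = 0
      · exact ⟨1, by simp [hy], by simpa using hx0⟩
      · obtain ⟨r, hr, hr0⟩ := hess1 _ ⟨y, rfl⟩ hy
        refine ⟨r, hr, fun h => hr0 ?_⟩
        have := (hdis (r • y) (r • z) (by simpa using h)).1
        simpa using this
    obtain ⟨r, hr, hr0⟩ := step1
    have step2 : ∃ r' : R, r' • r • e1 z ∈ L1 ∧ r' • r • (e1 y + s (e1 z)) ≠ 0 := by
      by_cases hz : r • e1 z = 0
      · exact ⟨1, by simp [hz], by simpa using hr0⟩
      · obtain ⟨r', hr', hr0'⟩ := hess1 (r • e1 z) ⟨r • z, by simp⟩ hz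
        refine ⟨r', hr', fun h => hr0' ?_⟩
        have := (hdis (r' • r • y) (r' • r • z) (by simpa using h)).2
        simpa using this
    obtain ⟨r', hr', hr0'⟩ := step2
    refine ⟨r' * r, ?_, by rwa [mul_smul]⟩
    rw [mul_smul, smul_add, smul_add]
    refine L.add_mem (Submodule.mem_sup_left (L1.smul_mem _ hr))
      (Submodule.mem_sup_right ⟨_, hr', by simp⟩)
  set p : Module.End R E := 1 - s * t with hp
  have hpx : ∀ x, p x = x - s (t x) := fun x => by simp [hp]
  have htp : ∀ x, t (p x) = 0 := fun x => by rw [hpx, map_sub, hts', sub_self]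
  set e' : Module.End R E := p + s * e * t with he'
  have he'x : ∀ x, e' x = x - s (t x) + s (e (t x)) := fun x => by simp [he', hpx]
  have hte' : ∀ x, t (e' x) = e (t x) := fun x => by
    rw [he'x]; simp [hts']
  have he'e' : ∀ x, e' (e' x) = e' x := fun x => by
    rw [he'x (e' x), hte', hee', sub_add_cancel]
  have he's : ∀ x, e' (s x) = s (e x) := fun x => by rw [he'x, hts']; simp
  have hfix' : ∀ x ∈ L, e' x = x := fun x hx => by
    rw [he'x, hfix _ (htL x hx), sub_add_cancel]
  have hess' : SbEss R L (LinearMap.range e') := by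
    rintro _ ⟨x, rfl⟩ hx0
    by_cases h : t (e' x) = 0
    · exact ⟨1, by simpa using hKL _ h, by simpa using hx0⟩
    · obtain ⟨r, hr, hr0⟩ := hess (t (e' x)) ⟨t x, (hte' x).symm⟩ h
      refine ⟨r, ?_, fun h0 => hr0 ?_⟩
      · have : r • e' x = p (r • e' x) + s (r • t (e' x)) := by
          rw [hpx]; simp
        rw [this]
        exact L.add_mem (hKL _ (htp _)) (hsL _ hr)
      · rw [← map_smul, h0, map_zero]
  set c : Module.End R E := e' * e + s * (1 - e) with hc
  have hcx : ∀ x, c x = e' (e x) + s (x - e x) := fun x => by simp [hc]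
  have he'c : ∀ x, e' (c x) = e' (e x) := fun x => by
    rw [hcx, map_add, he'e', he's, map_sub, hee']; simp
  have cinj : Function.Injective c := by
    rw [← LinearMap.ker_eq_bot, eq_bot_iff]
    intro x hx
    have hx : c x = 0 := hx
    have h1 : e' (e x) = 0 := by rw [← he'c, hx, map_zero]
    have h2 : x - e x = 0 := by
      rw [hcx, h1, zero_add] at hx
      exact sinj _ hx
    have h3 : e x = x := (sub_eq_zero.1 h2).symm
    rw [h3] at h1
    by_contra hne
    obtain ⟨r, hr, hr0⟩ := hess x ⟨x, h3⟩ (by simpa using hne)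
    have := hfix' _ hr
    rw [map_smul, h1, smul_zero] at this
    exact hr0 this.symm
  obtain ⟨d, hd⟩ := hE E E c cinj LinearMap.id
  have hd : ∀ x, d (c x) = x := fun x => LinearMap.congr_fun hd x
  have dinj : ∀ x, d x = 0 → x = 0 := by
    intro x hx
    by_contra hne
    have hcL : ∀ y ∈ L, c y = y := fun y hy => by
      rw [hcx, hfix y hy, hfix' y hy]; simp
    have hdec : ∀ x, x - e' x = c (t x - e (t x)) := fun x => by
      rw [hcx, map_sub e, hee', he'x]; simp; abel
    have hrange : ∃ r : R, r • x ≠ 0 ∧ ∃ y, c y = r • x := by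
      by_cases h : e' x = 0
      · exact ⟨1, by simpa using hne, _, by rw [← hdec x, h]; simp⟩
      · obtain ⟨r, hr, hr0⟩ := hess' _ ⟨x, rfl⟩ h
        refine ⟨r, fun h0 => hr0 (by rw [← map_smul, h0, map_zero]),
          r • e' x + r • (t x - e (t x)), ?_⟩
        rw [map_add, hcL _ hr, map_smul c, ← hdec x, ← smul_add, add_sub_cancel]
    obtain ⟨r, hr, y, hy⟩ := hrange
    have h1 := hd y
    rw [hy, map_smul, hx, smul_zero] at h1
    rw [← h1, map_zero] at hy
    exact hr hy.symm
  have hdc : d * c = 1 := LinearMap.ext hd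
  have hcd : c * d = 1 := by
    ext x
    have := dinj (c (d x) - x) (by rw [map_sub, hd, sub_self])
    exact sub_eq_zero.1 this
  have hdT : d ∈ T := hT d ⟨⟨d, c, hdc, hcd⟩, rfl⟩
  have hpe : p = e * p := by
    ext x
    exact (hfix _ (hKL _ (htp x))).symm
  have hsc : s - c = (s - e') * e := by rw [hc]; noncomm_ring
  have : t = d - (d * e * p + (d * (s - e')) * e * t) := by
    have h1 : d * e * p + (d * (s - e')) * e * t = d * (p + (s - c) * t) := by
      rw [hsc, mul_assoc d e p, ← hpe]; noncomm_ring
    have h2 : d * (p + (s - c) * t) = d - (d * c) * t := by rw [hp]; noncomm_ring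
    rw [h1, h2, hdc]; simp
  rw [this]
  exact T.sub_mem hdT (T.add_mem (hI _ _) (hI _ _))

variable (R)

/-- If `M` is automorphism-invariant and there are injective `R`-linear maps `f : M → N`
and `g : N → M`, then `f(M)` is a direct summand of `N`: there is a submodule `H` of `N`
with `N = H ⊕ f(M)` (internally, `H` is a complement of `f(M)`). -/
theorem stmt14 (M N : Type u) [AddCommGroup M] [Module R M] [AddCommGroup N] [Module R N]
    (hM : IsAutomorphismInvariant R M)
    (f : M →ₗ[R] N) (hf : Function.Injective f)
    (g : N →ₗ[R] M) (hg : Function.Injective g) :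
    ∃ H : Submodule R N, IsCompl H (LinearMap.range f) := by
  obtain ⟨E, _, _, u, ⟨hE, hu, hess⟩, hinv⟩ := hM
  obtain ⟨s, hs⟩ := hE M E u hu (u ∘ₗ g ∘ₗ f)
  have hs' : ∀ x, s (u x) = u (g (f x)) := fun x => LinearMap.congr_fun hs x
  have hsinj : Function.Injective s := by
    rw [← LinearMap.ker_eq_bot]
    refine hess _ ?_
    rw [eq_bot_iff]
    rintro _ ⟨h, ⟨x, rfl⟩⟩
    have h' : s (u x) = 0 := h
    rw [hs'] at h'
    have : x = 0 := by
      apply hf; apply hg; apply hu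
      simpa using h'
    simp [this]
  obtain ⟨t, ht⟩ := hE E E s hsinj LinearMap.id
  let T : Subring (Module.End R E) :=
    { carrier := {x | ∀ m, x (u m) ∈ LinearMap.range u}
      mul_mem' := by
        intro x y hx hy m
        obtain ⟨n, hn⟩ := hy m
        show x (y (u m)) ∈ _
        rw [← hn]
        exact hx n
      one_mem' := fun m => ⟨m, rfl⟩
      add_mem' := fun hx hy m => Submodule.add_mem _ (hx m) (hy m)
      zero_mem' := fun m => Submodule.zero_mem _
      neg_mem' := fun hx m => Submodule.neg_mem _ (hx m) }
  have hT : ∀ x : Module.End R E, IsUnit x → x ∈ T := by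
    intro x hx m
    exact hinv (LinearEquiv.ofBijective x ((Module.End.isUnit_iff x).1 hx)) m
  have htT : ∀ m, t (u m) ∈ LinearMap.range u := sb_main hE T hT s t ht
  let r : M →ₗ[R] M := (LinearEquiv.ofInjective u hu).symm.toLinearMap ∘ₗ
    LinearMap.codRestrict (LinearMap.range u) (t ∘ₗ u) htT
  have hur : ∀ m, u (r m) = t (u m) := fun m => by
    have := (LinearEquiv.ofInjective u hu).apply_symm_apply
      (LinearMap.codRestrict (LinearMap.range u) (t ∘ₗ u) htT m)
    exact congrArg Subtype.val this
  have hr : ∀ m, r (g (f m)) = m := fun m => by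
    apply hu
    rw [hur, ← hs']
    exact LinearMap.congr_fun ht (u m)
  refine ⟨LinearMap.ker (r ∘ₗ g), ?_, ?_⟩
  · rw [Submodule.disjoint_def]
    rintro _ h ⟨m, rfl⟩
    have h' : r (g (f m)) = 0 := h
    rw [hr] at h'
    simp [h']
  · rw [codisjoint_iff, eq_top_iff]
    intro n _
    refine Submodule.mem_sup.2 ⟨n - f (r (g n)), ?_, f (r (g n)), ⟨_, rfl⟩, by simp⟩
    simp [hr]
end

section
/- Let R be a ring, let M and N be right R-modules that are invariant under automorphisms of their pure-injective envelopes, and let f : M → N and g : N → M be pure monomorphisms. Then M ≅ N. -/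
/-!
Corollary 3.2: Schröder–Bernstein for pure-automorphism-invariant modules.
"Right R-modules" are formalized as Lean `Module R` modules (the theory is
side-symmetric).
-/

universe u

variable (R : Type u) [Ring R]

/-- `E` is pure-injective: for every pure monomorphism `i : A → B`, every homomorphism
`A → E` extends to a homomorphism `B → E`. -/
def IsPureInjective (E : Type u) [AddCommGroup E] [Module R E] : Prop :=
  ∀ (A B : Type u) [AddCommGroup A] [Module R A] [AddCommGroup B] [Module R B]
    (i : A →ₗ[R] B), IsPureMono R i → ∀ f : A →ₗ[R] E, ∃ g : B →ₗ[R] E, g ∘ₗ i = f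

/-- `u : M → P` is a pure-injective envelope of `M`: `u` is a pure monomorphism into a
pure-injective module `P`, every homomorphism from `M` to a pure-injective module factors
through `u`, and every endomorphism `h` of `P` with `h ∘ u = u` is an automorphism. -/
def IsPureInjectiveEnvelope (M P : Type u) [AddCommGroup M] [Module R M]
    [AddCommGroup P] [Module R P] (u : M →ₗ[R] P) : Prop :=
  IsPureMono R u ∧ IsPureInjective R P ∧
    (∀ (Q : Type u) [AddCommGroup Q] [Module R Q], IsPureInjective R Q →
      ∀ f : M →ₗ[R] Q, ∃ g : P →ₗ[R] Q, g ∘ₗ u = f) ∧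
    (∀ h : P →ₗ[R] P, h ∘ₗ u = u → Function.Bijective h)

/-- `M` is invariant under automorphisms of its pure-injective envelope
(pure-automorphism-invariant): for a pure-injective envelope `u : M → P` and every
automorphism `φ` of `P`, there is an endomorphism `f` of `M` with `u ∘ f = φ ∘ u`. -/
def IsPureAutomorphismInvariant (M : Type u) [AddCommGroup M] [Module R M] : Prop :=
  ∃ (P : Type u) (_ : AddCommGroup P) (_ : Module R P) (u : M →ₗ[R] P),
    IsPureInjectiveEnvelope R M P u ∧
    ∀ φ : P ≃ₗ[R] P, ∃ f : M →ₗ[R] M, u ∘ₗ f = (φ : P →ₗ[R] P) ∘ₗ u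

section Aux

variable {R}

/-- Limit functional on a pure-injective module. -/
theorem exists_limit {Q : Type u} [AddCommGroup Q] [Module R Q] (hQ : IsPureInjective R Q)
    {ι : Type u} (l : Filter ι) [l.NeBot] :
    ∃ c : (ι → Q) →ₗ[R] Q, (∀ x y : ι → Q, (∀ᶠ i in l, x i = y i) → c x = c y) ∧
      ∀ q : Q, c (fun _ => q) = q := by
  let N : Submodule R (ι → Q) :=
    { carrier := {x | ∀ᶠ i in l, x i = 0}
      add_mem' := by
        intro a b ha hb
        filter_upwards [ha, hb] with i h1 h2
        simp [h1, h2]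
      zero_mem' := Filter.Eventually.of_forall (fun i => rfl)
      smul_mem' := by
        intro r a ha
        filter_upwards [ha] with i h1
        simp [h1] }
  have hN : ∀ x, x ∈ N ↔ ∀ᶠ i in l, x i = 0 := fun x => Iff.rfl
  let δ : Q →ₗ[R] ((ι → Q) ⧸ N) := N.mkQ ∘ₗ (LinearMap.pi fun _ => LinearMap.id)
  have hδ : IsPureMono R δ := by
    constructor
    · rw [injective_iff_map_eq_zero]
      intro q hq
      have : (LinearMap.pi fun _ => LinearMap.id : Q →ₗ[R] (ι → Q)) q ∈ N := by
        simpa [δ] using hq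
      rw [hN] at this
      obtain ⟨i, hi⟩ := this.exists
      simpa using hi
    · rintro m n r a ⟨y, hy⟩
      choose z hz using fun j => N.mkQ_surjective (y j)
      have h1 : ∀ i, ∀ᶠ k in l, ∑ j, r i j • z j k = a i := by
        intro i
        have h2 := hy i
        simp only [← hz, δ, LinearMap.comp_apply, ← map_smul, ← map_sum] at h2
        rw [← sub_eq_zero, ← map_sub, ← LinearMap.mem_ker, Submodule.ker_mkQ, hN] at h2
        filter_upwards [h2] with k hk
        simpa [sub_eq_zero] using hk
      obtain ⟨k, hk⟩ := (Filter.eventually_all.2 h1).exists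
      exact ⟨fun j => z j k, hk⟩
  obtain ⟨g, hg⟩ := hQ _ _ δ hδ LinearMap.id
  refine ⟨g ∘ₗ N.mkQ, ?_, ?_⟩
  · intro x y hxy
    simp only [LinearMap.comp_apply]
    congr 1
    rw [← sub_eq_zero, ← map_sub, ← LinearMap.mem_ker, Submodule.ker_mkQ, hN]
    filter_upwards [hxy] with k hk
    simp [hk]
  · intro q
    exact LinearMap.congr_fun hg q

theorem exists_max {Q Z : Type u} [AddCommGroup Q] [Module R Q] [AddCommGroup Z] [Module R Z]
    (hQ : IsPureInjective R Q) (h0 : Q →ₗ[R] Z) :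
    ∃ h : Module.End R Q, (∃ c : Z →ₗ[R] Q, 1 - h = c ∘ₗ h0) ∧
      ∀ k : Module.End R Q, (∃ c : Z →ₗ[R] Q, 1 - k = c ∘ₗ h0) →
        (∃ d, k = d * h) → ∃ d, h = d * k := by
  let T := {h : Module.End R Q // ∃ c : Z →ₗ[R] Q, 1 - h = c ∘ₗ h0}
  let r : T → T → Prop := fun h k => ∃ d, k.1 = d * h.1
  have rrefl : ∀ a, r a a := fun a => ⟨1, (one_mul _).symm⟩
  have rtrans : ∀ {a b c}, r a b → r b c → r a c := by
    rintro a b c ⟨d, hd⟩ ⟨e, he⟩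
    exact ⟨e * d, by rw [he, hd, mul_assoc]⟩
  obtain ⟨m, hm⟩ := exists_maximal_of_chains_bounded (r := r) (by
    intro C hC
    rcases C.eq_empty_or_nonempty with rfl | hne
    · exact ⟨⟨1, 0, by simp⟩, by simp⟩
    let _ : Preorder C :=
      { le := fun a b => r a.1 b.1
        le_refl := fun a => rrefl a.1
        le_trans := fun a b c => rtrans }
    have : Nonempty C := hne.to_subtype
    have : IsDirectedOrder C := ⟨by
      intro a b
      by_cases hab : a.1 = b.1
      · exact ⟨a, rrefl _, by change r b.1 a.1; rw [hab]; exact rrefl _⟩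
      · rcases hC a.2 b.2 hab with h | h
        · exact ⟨b, h, rrefl _⟩
        · exact ⟨a, rrefl _, h⟩⟩
    obtain ⟨c, hc1, hc2⟩ := exists_limit hQ (Filter.atTop : Filter C)
    choose d hd using fun i : C => i.1.2
    refine ⟨⟨c ∘ₗ (LinearMap.pi fun i : C => i.1.1), c ∘ₗ (LinearMap.pi d), ?_⟩, ?_⟩
    · ext q
      simp only [LinearMap.sub_apply, Module.End.one_apply, LinearMap.comp_apply]
      have h1 : q - c ((LinearMap.pi fun i : C => i.1.1) q) =
          c (fun _ => q) - c ((LinearMap.pi fun i : C => i.1.1) q) := by rw [hc2 q]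
      rw [h1, ← map_sub]
      congr 1
      ext i
      exact LinearMap.congr_fun (hd i) q
    · intro a ha
      classical
      let D : C → Module.End R Q := fun i => if h : r a i.1 then h.choose else 0
      refine ⟨c ∘ₗ (LinearMap.pi D), ?_⟩
      ext q
      simp only [Module.End.mul_apply, LinearMap.comp_apply]
      apply hc1
      filter_upwards [Filter.eventually_ge_atTop (⟨a, ha⟩ : C)] with i hi
      have hi' : r a i.1 := hi
      simp only [LinearMap.pi_apply, D, dif_pos hi']
      exact LinearMap.congr_fun hi'.choose_spec q) rtrans
  exact ⟨m.1, m.2, fun k hk hd => hm ⟨k, hk⟩ hd⟩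

/-- `e` is a hull idempotent for the submodule `W`. -/
def IsHull {Q : Type u} [AddCommGroup Q] [Module R Q] (W : Submodule R Q)
    (e : Module.End R Q) : Prop :=
  e * e = e ∧ (∀ w ∈ W, e w = w) ∧
    ∀ k : Module.End R Q, (∀ w ∈ W, k w = w) → ∃ l, l * k * e = e

theorem exists_hull {Q : Type u} [AddCommGroup Q] [Module R Q]
    (hQ : IsPureInjective R Q) (W : Submodule R Q) : ∃ e, IsHull W e := by
  have key : ∀ k : Module.End R Q, (∀ w ∈ W, k w = w) ↔
      ∃ c : (Q ⧸ W) →ₗ[R] Q, 1 - k = c ∘ₗ W.mkQ := by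
    intro k
    constructor
    · intro h
      refine ⟨W.liftQ (1 - k) ?_, (W.liftQ_mkQ _ _).symm⟩
      intro w hw
      simp [h w hw]
    · rintro ⟨c, hc⟩ w hw
      have := LinearMap.congr_fun hc w
      simp only [LinearMap.sub_apply, Module.End.one_apply, LinearMap.comp_apply,
        Submodule.mkQ_apply, (Submodule.Quotient.mk_eq_zero W).2 hw, map_zero] at this
      exact (sub_eq_zero.1 this).symm
  obtain ⟨h, ⟨c0, hc0⟩, hmax⟩ := exists_max hQ W.mkQ
  have hW := (key h).2 ⟨c0, hc0⟩
  obtain ⟨j, ⟨c1, hc1⟩, jmax⟩ := exists_max hQ h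
  change 1 - j = c1 * h at hc1
  obtain ⟨l, hl⟩ := jmax ((1 - h) * j) ⟨c1 + (1 - h * c1), by
    change 1 - (1 - h) * j = (c1 + (1 - h * c1)) * h
    have : j = 1 - c1 * h := by rw [← hc1]; abel
    rw [this]; noncomm_ring⟩ ⟨_, rfl⟩
  have hc : j = (l * (1 - h)) * j := by rw [mul_assoc]; exact hl
  have hk0 : (1 - l * (1 - h)) * j = 0 := by
    rw [sub_mul, one_mul, ← hc, sub_self]
  obtain ⟨d, hd⟩ := hmax (1 - l * (1 - h)) ⟨l ∘ₗ c0, by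
    rw [sub_sub_cancel, hc0]; rfl⟩ ⟨(1 - l * (1 - h)) * c1, by
      rw [mul_assoc, ← hc1, mul_sub (1 - l * (1 - h)), hk0]; simp⟩
  have hj : h * j = 0 := by rw [hd, mul_assoc, hk0, mul_zero]
  have hreg : h * c1 * h = h := by
    rw [mul_assoc, ← hc1, mul_sub, hj]; simp
  refine ⟨h * c1, ?_, ?_, ?_⟩
  · rw [← mul_assoc, hreg]
  · intro w hw
    have := LinearMap.congr_fun hreg w
    rwa [Module.End.mul_apply, hW w hw] at this
  · intro k hk
    obtain ⟨l', hl'⟩ := hmax (k * h) ((key _).1 (by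
      intro w hw
      rw [Module.End.mul_apply, hW w hw, hk w hw])) ⟨k, rfl⟩
    refine ⟨l', ?_⟩
    rw [mul_assoc, ← mul_assoc k, ← mul_assoc l', ← hl']

theorem hull_package {Q : Type u} [AddCommGroup Q] [Module R Q]
    (hQ : IsPureInjective R Q) (W : Submodule R Q) (s t κ : Module.End R Q)
    (hts : t * s = 1) (hκs : κ * s = 0) (htκ : t * κ = 0) (hκκ : κ * κ = κ)
    (hW1 : ∀ q, κ q ∈ W) (hW2 : ∀ w ∈ W, s w ∈ W)
    (hW3 : ∀ w ∈ W, ∃ q, ∃ w' ∈ W, w = κ q + s w') :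
    ∃ e y e2 : Module.End R Q, IsHull W e ∧ e2 = κ + s * e * t ∧ e2 * e2 = e2 ∧ e2 * y = y ∧
      y * e2 = y ∧ e2 * e * y = e2 ∧ y * e * e2 = e2 ∧ e * y * e = e ∧ e2 * s = s * e := by
  obtain ⟨e, he⟩ := exists_hull hQ W
  obtain ⟨hee, heW, hhull⟩ := he
  obtain ⟨e2, he2⟩ : ∃ e2, e2 = κ + s * e * t := ⟨_, rfl⟩
  have he2W : ∀ w ∈ W, e2 w = w := by
    intro w hw
    obtain ⟨q, w', hw', rfl⟩ := hW3 w hw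
    have h1 : e2 * κ = κ := by
      rw [he2, add_mul, hκκ, mul_assoc, htκ, mul_zero, add_zero]
    have h2 : e2 * s = s * e := by
      rw [he2, add_mul, hκs, mul_assoc, hts, mul_one, zero_add]
    rw [map_add, ← Module.End.mul_apply, ← Module.End.mul_apply, h1, h2, Module.End.mul_apply,
      heW w' hw']
  have he2s : e2 * s = s * e := by
    rw [he2, add_mul, hκs, mul_assoc, hts, mul_one, zero_add]
  have he22 : e2 * e2 = e2 := by
    have h1 : e2 * (κ + s * e * t) = e2 * κ + (e2 * s) * e * t := by noncomm_ring
    have h2 : e2 * κ = κ := by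
      rw [he2, add_mul, hκκ, mul_assoc, htκ, mul_zero, add_zero]
    have h3 : e2 * (κ + s * e * t) = κ + s * e * t := by
      rw [h1, h2, he2s, mul_assoc s, hee]
    rwa [← he2] at h3
  have hhull2 : ∀ k : Module.End R Q, (∀ w ∈ W, k w = w) → ∃ l, l * k * e2 = e2 := by
    intro k hk
    have hkκ : k * κ = κ := LinearMap.ext fun q => hk _ (hW1 q)
    obtain ⟨l, hl⟩ := hhull (t * k * s) (by
      intro w hw
      rw [Module.End.mul_apply, Module.End.mul_apply, hk _ (hW2 w hw), ← Module.End.mul_apply, hts,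
        Module.End.one_apply])
    refine ⟨1 - k * s * l * t + s * e * l * t, ?_⟩
    have e1 : (1 - k * s * l * t + s * e * l * t) * k * κ = κ := by
      rw [mul_assoc, hkκ]
      linear_combination (norm := noncomm_ring) (- k * s * l + s * e * l) * htκ
    have e3 : (1 - k * s * l * t + s * e * l * t) * k * (s * e * t) = s * e * t := by
      have : s * e * e * t = s * e * t := by rw [mul_assoc s, hee]
      linear_combination (norm := noncomm_ring) (- k * s) * hl * t + (s * e) * hl * t + this
    rw [he2, mul_add, e1, e3]
  obtain ⟨l1, hl1⟩ := hhull2 (e2 * e) (fun w hw => by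
    rw [Module.End.mul_apply, heW w hw, he2W w hw])
  have hl1W : ∀ w ∈ W, l1 w = w := by
    intro w hw
    have := LinearMap.congr_fun hl1 w
    simpa [Module.End.mul_apply, heW w hw, he2W w hw] using this
  obtain ⟨y, hy⟩ : ∃ y, y = e2 * l1 * e2 := ⟨_, rfl⟩
  have hy1 : e2 * y = y := by rw [hy, ← mul_assoc, ← mul_assoc, he22]
  have hy2 : y * e2 = y := by rw [hy, mul_assoc, he22]
  have hyx : y * e * e2 = e2 := by
    have : e2 * l1 * e2 * e * e2 = e2 * (l1 * (e2 * e) * e2) := by noncomm_ring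
    rw [hy, this, hl1, he22]
  obtain ⟨l2, hl2⟩ := hhull2 y (fun w hw => by
    rw [hy, Module.End.mul_apply, Module.End.mul_apply, he2W w hw, hl1W w hw, he2W w hw])
  rw [mul_assoc, hy2] at hl2
  have hxl : e2 * e * e2 = l2 * e2 := by
    have : l2 * y * e * e2 = l2 * (y * e * e2) := by noncomm_ring
    rw [hl2, hyx] at this
    exact this
  have hxy : e2 * e * y = e2 := by
    rw [← hy1, ← mul_assoc, hxl, mul_assoc, hy1, hl2]
  obtain ⟨l, hl⟩ := hhull e2 he2W
  refine ⟨e, y, e2, ⟨hee, heW, hhull⟩, he2, he22, hy1, hy2, hxy, hyx, ?_, he2s⟩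
  have h1 : l * (e2 * e * y) * e = e := by rw [hxy, hl]
  have h2 : l * (e2 * e * y) * e = l * e2 * e * y * e := by noncomm_ring
  rw [h2, hl] at h1
  exact h1

/-- Step 1: mutually embedded (as summands) pure-injectives are isomorphic. -/
theorem step_one {P Q : Type u} [AddCommGroup P] [Module R P] [AddCommGroup Q] [Module R Q]
    (hP : IsPureInjective R P) (f : P →ₗ[R] Q) (f' : Q →ₗ[R] P) (g : Q →ₗ[R] P) (g' : P →ₗ[R] Q)
    (hf : f' ∘ₗ f = LinearMap.id) (hg : g' ∘ₗ g = LinearMap.id) : Nonempty (P ≃ₗ[R] Q) := by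
  have hf1 : ∀ x, f' (f x) = x := LinearMap.congr_fun hf
  have hg1 : ∀ x, g' (g x) = x := LinearMap.congr_fun hg
  obtain ⟨s, hs⟩ : ∃ s : Module.End R P, s = g ∘ₗ f := ⟨_, rfl⟩
  obtain ⟨t, ht⟩ : ∃ t : Module.End R P, t = f' ∘ₗ g' := ⟨_, rfl⟩
  obtain ⟨γ, hγ⟩ : ∃ γ : Module.End R P, γ = g ∘ₗ g' := ⟨_, rfl⟩
  have hts : t * s = 1 := by ext x; simp [hs, ht, hf1, hg1]
  have hγs : γ * s = s := by ext x; simp [hs, hγ, hg1]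
  have htγ : t * γ = t := by ext x; simp [ht, hγ, hg1]
  have hγγ : γ * γ = γ := by ext x; simp [hγ, hg1]
  obtain ⟨κ, hκ⟩ : ∃ κ : Module.End R P, κ = 1 - γ := ⟨_, rfl⟩
  have hκs : κ * s = 0 := by rw [hκ, sub_mul, hγs, one_mul, sub_self]
  have htκ : t * κ = 0 := by rw [hκ, mul_sub, htγ, mul_one, sub_self]
  have hκκ : κ * κ = κ := by
    rw [hκ]; linear_combination (norm := noncomm_ring) hγγ
  let W : Submodule R P := Submodule.span R {x | ∃ n : ℕ, ∃ q, x = (s ^ n) (κ q)}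
  obtain ⟨e, y, e2, ⟨hee, -, -⟩, he2, he22, hy1, hy2, hxy, hyx, heye, he2s⟩ :=
    hull_package hP W s t κ hts hκs htκ hκκ (fun q => Submodule.subset_span ⟨0, q, by simp⟩)
      (by
        intro w hw
        have : W ≤ W.comap s := by
          refine Submodule.span_le.2 ?_
          rintro x ⟨n, q, rfl⟩
          exact Submodule.subset_span ⟨n + 1, q, by rw [pow_succ', Module.End.mul_apply]⟩
        exact this hw)
      (by
        intro w hw
        refine Submodule.span_induction (p := fun w _ => ∃ q, ∃ w' ∈ W, w = κ q + s w')
          ?_ ?_ ?_ ?_ hw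
        · rintro x ⟨n, q, rfl⟩
          rcases n with _ | n
          · exact ⟨q, 0, W.zero_mem, by simp⟩
          · exact ⟨0, (s ^ n) (κ q), Submodule.subset_span ⟨n, q, rfl⟩, by
              rw [pow_succ', Module.End.mul_apply]; simp⟩
        · exact ⟨0, 0, W.zero_mem, by simp⟩
        · rintro _ _ - - ⟨q, w, hw, rfl⟩ ⟨q', w', hw', rfl⟩
          exact ⟨q + q', w + w', W.add_mem hw hw', by simp only [map_add]; abel⟩
        · rintro r _ - ⟨q, w, hw, rfl⟩
          exact ⟨r • q, r • w, W.smul_mem r hw, by simp⟩)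
  have hκe2 : κ * e2 = κ := by
    rw [he2]; linear_combination (norm := noncomm_ring) hκκ + hκs * e * t
  have hγ' : γ = 1 - κ := by rw [hκ]; abel
  have hete2 : e * t * e2 = e * t := by
    rw [he2]
    linear_combination (norm := noncomm_ring) e * htκ + e * hts * e * t + hee * t
  have hyee : y * e * e2 = e2 := hyx
  let A : Module.End R P := s * e * e2 + (1 - e2)
  let B : Module.End R P := y * e * t + (1 - e2)
  have hBA : B * γ * A = 1 := by
    have h1 : γ * A = A := by
      simp only [A]
      rw [mul_add, ← mul_assoc, ← mul_assoc, hγs]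
      rw [hγ']
      linear_combination (norm := noncomm_ring) hκe2
    rw [mul_assoc, h1]
    simp only [A, B]
    have h2 : y * e * t * s * e * e2 = e2 := by
      linear_combination (norm := noncomm_ring) y * e * hts * e * e2 + y * hee * e2 + hyx
    have h3 : e2 * s * e * e2 = s * e * e2 := by
      rw [he2s, mul_assoc s, hee]
    linear_combination (norm := noncomm_ring) h2 - y * hete2 - h3 + he22
  have hAB : A * B = γ := by
    simp only [A, B]
    rw [hγ']
    have h2 : s * e * e2 * y * e * t = s * e * t := by
      linear_combination (norm := noncomm_ring) s * e * hy1 * e * t + s * heye * t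
    have h3 : e2 * y * e * t = y * e * t := by rw [hy1]
    linear_combination (norm := noncomm_ring) h2 - h3 - s * e * he22 + he22 - he2
  refine ⟨LinearEquiv.ofLinearMap (g' ∘ₗ A) (B ∘ₗ g) ?_ ?_⟩
  · ext x
    have := LinearMap.congr_fun hAB (g x)
    simp only [Module.End.mul_apply, hγ, LinearMap.comp_apply, hg1] at this
    simp [this, hg1]
  · ext x
    have := LinearMap.congr_fun hBA x
    simpa [Module.End.mul_apply, hγ] using this

theorem isUnit_of_jac {S : Type*} [Ring S] {x : S} (hx : x ∈ Ring.jacobson S) :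
    IsUnit (1 + x) := by
  have key : ∀ x ∈ Ring.jacobson S, ∃ z, z * (1 + x) = 1 := by
    intro x hx
    rw [← Ideal.jacobson_bot, Ideal.mem_jacobson_iff] at hx
    obtain ⟨z, hz⟩ := hx 1
    refine ⟨z, ?_⟩
    rw [Ideal.mem_bot] at hz
    linear_combination (norm := noncomm_ring) hz
  obtain ⟨z, hz⟩ := key x hx
  obtain ⟨z', hz'⟩ := key (-(z * x)) (neg_mem (Ideal.mul_mem_left _ _ hx))
  have h1 : 1 + -(z * x) = z := by linear_combination (norm := noncomm_ring) -hz
  rw [h1] at hz'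
  have : z' = 1 + x := by
    linear_combination (norm := noncomm_ring) hz' * (1 + x) - z' * hz
  rw [this] at hz'
  exact ⟨⟨1 + x, z, hz', hz⟩, rfl⟩

theorem corner_mem {S : Type*} [Ring S] (X : Subring S) (hX : ∀ x, IsUnit x → x ∈ X)
    (f₁ f₂ p q : S) (h12 : f₁ * f₂ ∈ Ring.jacobson S) (h21 : f₂ * f₁ ∈ Ring.jacobson S)
    (h1 : f₁ * p * f₂ * f₂ * q * (f₁ + f₂) - f₁ ∈ Ring.jacobson S)
    (h2 : f₂ * q * f₁ * f₁ * p * (f₁ + f₂) - f₂ ∈ Ring.jacobson S) (z : S) :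
    (f₁ + f₂) * z * (f₁ + f₂) ∈ X := by
  have hJ : ∀ x ∈ Ring.jacobson S, x ∈ X := by
    intro x hx
    have := X.sub_mem (hX _ (isUnit_of_jac hx)) X.one_mem
    simpa using this
  have hn : ∀ n, n * n ∈ Ring.jacobson S → n ∈ X := by
    intro n hn
    have hu : IsUnit (1 + -(n * n)) := isUnit_of_jac (neg_mem hn)
    obtain ⟨v, hv⟩ := hu
    have a1 : (1 + n) * (1 - n) = v := by rw [hv]; noncomm_ring
    have a2 : (1 - n) * (1 + n) = v := by rw [hv]; noncomm_ring
    have b1 : (1 + n) * ((1 - n) * ↑v⁻¹) = 1 := by rw [← mul_assoc, a1, Units.mul_inv]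
    have b2 : (↑v⁻¹ * (1 - n)) * (1 + n) = 1 := by rw [mul_assoc, a2, Units.inv_mul]
    have hu : IsUnit (1 + n) := isUnit_iff_exists_and_exists.2 ⟨⟨_, b1⟩, ⟨_, b2⟩⟩
    have := X.sub_mem (hX _ hu) X.one_mem
    simpa using this
  have n12 : ∀ z, f₁ * z * f₂ ∈ X := by
    intro z
    apply hn
    have : f₁ * z * f₂ * (f₁ * z * f₂) = (f₁ * z) * ((f₂ * f₁) * (z * f₂)) := by noncomm_ring
    rw [this]
    exact Ideal.mul_mem_left _ _ (Ideal.mul_mem_right _ _ h21)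
  have n21 : ∀ z, f₂ * z * f₁ ∈ X := by
    intro z
    apply hn
    have : f₂ * z * f₁ * (f₂ * z * f₁) = (f₂ * z) * ((f₁ * f₂) * (z * f₁)) := by noncomm_ring
    rw [this]
    exact Ideal.mul_mem_left _ _ (Ideal.mul_mem_right _ _ h12)
  have n11 : f₁ * z * f₁ ∈ X := by
    have a := X.mul_mem (n12 p) (n21 (q * (f₁ + f₂) * z))
    have b := hJ _ (Ideal.mul_mem_right (z * f₁) _ h1)
    have := X.sub_mem a b
    convert this using 1
    noncomm_ring
  have n22 : f₂ * z * f₂ ∈ X := by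
    have a := X.mul_mem (n21 q) (n12 (p * (f₁ + f₂) * z))
    have b := hJ _ (Ideal.mul_mem_right (z * f₂) _ h2)
    have := X.sub_mem a b
    convert this using 1
    noncomm_ring
  have := X.add_mem (X.add_mem n11 (n12 z)) (X.add_mem (n21 z) n22)
  convert this using 1
  noncomm_ring

theorem mem_jac_of_hull {Q : Type u} [AddCommGroup Q] [Module R Q] {W : Submodule R Q}
    {e : Module.End R Q} (he : IsHull W e) (x : Module.End R Q) (hxe : x * e = x)
    (hxW : ∀ w ∈ W, x w = 0) : x ∈ Ring.jacobson (Module.End R Q) := by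
  obtain ⟨hee, heW, hh⟩ := he
  rw [← Ideal.jacobson_bot, Ideal.mem_jacobson_iff]
  intro a
  obtain ⟨l, hl⟩ := hh (1 + e * a * x) (by
    intro w hw
    simp [hxW w hw])
  have h1 : (e * l * e + (1 - e)) * (1 + e * (a * x)) = 1 := by
    have h3 : e * l * (e * a * x + e) = e := by
      have : l * (1 + e * a * x) * e = l * (e * a * x + e) := by
        linear_combination (norm := noncomm_ring) l * e * a * hxe
      rw [this] at hl
      rw [mul_assoc, hl, hee]
    linear_combination (norm := noncomm_ring) h3 + e * l * hee * a * x - hee * a * x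
  obtain ⟨l', hl'⟩ : ∃ l', l' = e * l * e + (1 - e) := ⟨_, rfl⟩
  rw [← hl'] at h1
  refine ⟨1 - a * x * l' * e, ?_⟩
  rw [Ideal.mem_bot]
  linear_combination (norm := noncomm_ring)
    - a * x * h1 * e - (a - a * x * l' * e * a) * hxe

theorem step_two {Q : Type u} [AddCommGroup Q] [Module R Q] (hQ : IsPureInjective R Q)
    (M N : Submodule R Q) (hM : ∀ φ : Q ≃ₗ[R] Q, ∀ x ∈ M, φ x ∈ M)
    (hN : ∀ φ : Q ≃ₗ[R] Q, ∀ x ∈ N, φ x ∈ N) (s t : Module.End R Q) (hts : t * s = 1)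
    (hsMN : ∀ x ∈ M, s x ∈ N) : ∃ θ : Q ≃ₗ[R] Q, ∀ x ∈ M, θ x ∈ N := by
  let W : Submodule R Q :=
    { carrier := {q | ∃ n : ℕ, (t ^ n) q = 0}
      add_mem' := by
        rintro a b ⟨n, hn⟩ ⟨m, hm⟩
        refine ⟨n + m, ?_⟩
        have h1 : (t ^ (n + m)) a = 0 := by
          rw [add_comm, pow_add, Module.End.mul_apply, hn, map_zero]
        have h2 : (t ^ (n + m)) b = 0 := by
          rw [pow_add, Module.End.mul_apply, hm, map_zero]
        rw [map_add, h1, h2, add_zero]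
      zero_mem' := ⟨0, by simp⟩
      smul_mem' := by
        rintro r a ⟨n, hn⟩
        exact ⟨n, by rw [map_smul, hn, smul_zero]⟩ }
  have hW : ∀ q, q ∈ W ↔ ∃ n : ℕ, (t ^ n) q = 0 := fun q => Iff.rfl
  obtain ⟨κ, hκ⟩ : ∃ κ, κ = 1 - s * t := ⟨_, rfl⟩
  have hκs : κ * s = 0 := by
    rw [hκ]; linear_combination (norm := noncomm_ring) -s * hts
  have htκ : t * κ = 0 := by
    rw [hκ]; linear_combination (norm := noncomm_ring) -hts * t
  have hκκ : κ * κ = κ := by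
    nth_rewrite 2 [hκ]
    linear_combination (norm := noncomm_ring) -hκs * t
  have hκW : ∀ q, κ q ∈ W := fun q => (hW _).2 ⟨1, by
    rw [pow_one, ← Module.End.mul_apply, htκ, LinearMap.zero_apply]⟩
  have hts' : ∀ q, t (s q) = q := LinearMap.congr_fun hts
  have hκs' : ∀ q, κ (s q) = 0 := LinearMap.congr_fun hκs
  have htκ' : ∀ q, t (κ q) = 0 := LinearMap.congr_fun htκ
  have hκκ' : ∀ q, κ (κ q) = κ q := LinearMap.congr_fun hκκ
  have hsW : ∀ w ∈ W, s w ∈ W := by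
    rintro w ⟨n, hn⟩
    exact ⟨n + 1, by rw [pow_succ, Module.End.mul_apply, hts', hn]⟩
  have htW : ∀ w ∈ W, t w ∈ W := by
    rintro w ⟨n, hn⟩
    exact ⟨n, by rw [← Module.End.mul_apply, ← pow_succ, pow_succ', Module.End.mul_apply, hn,
      map_zero]⟩
  have hdec : ∀ w, w = κ w + s (t w) := by
    intro w; simp [hκ]
  obtain ⟨e, y, e2, he, he2, he22, hy1, hy2, hxy, hyx, heye, he2s⟩ :=
    hull_package hQ W s t κ hts hκs htκ hκκ hκW hsW
      (fun w hw => ⟨w, t w, htW w hw, hdec w⟩)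
  -- the parity projection
  let E : ℕ → Module.End R Q := fun n => Nat.rec 0 (fun _ x => κ + s * (1 - x) * t) n
  have hE : ∀ n, E (n + 1) = κ + s * (1 - E n) * t := fun n => rfl
  obtain ⟨c, hc1, hc2⟩ := exists_limit hQ (Filter.map ULift.up.{u} (Filter.atTop : Filter ℕ))
  let ε : Module.End R Q := c ∘ₗ LinearMap.pi (fun i => E i.down)
  have hstab : ∀ n w, (t ^ n) w = 0 → ∃ v, ∀ k, n ≤ k → E k w = v := by
    intro n
    induction n with
    | zero =>
      intro w hw
      refine ⟨0, fun k _ => ?_⟩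
      have : w = 0 := by simpa using hw
      rw [this, map_zero]
    | succ n ih =>
      intro w hw
      obtain ⟨v, hv⟩ := ih (t w) (by rwa [← Module.End.mul_apply, ← pow_succ])
      refine ⟨κ w + s (t w - v), fun k hk => ?_⟩
      obtain ⟨k, rfl⟩ : ∃ k', k = k' + 1 := ⟨k - 1, by omega⟩
      rw [hE]
      simp [hv k (by omega)]
  have hlim : ∀ w ∈ W, ∃ n, ∀ k, n ≤ k → E k w = ε w := by
    rintro w ⟨n, hn⟩
    obtain ⟨v, hv⟩ := hstab n w hn
    refine ⟨n, fun k hk => ?_⟩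
    rw [hv k hk]
    have : ε w = c (fun _ => v) := by
      apply hc1
      rw [Filter.eventually_map]
      filter_upwards [Filter.eventually_ge_atTop n] with k hk
      exact hv k hk
    rw [this, hc2]
  have hrec : ∀ w ∈ W, ε w = κ w + s (t w - ε (t w)) := by
    intro w hw
    obtain ⟨n, hn⟩ := hlim w hw
    obtain ⟨m, hm⟩ := hlim (t w) (htW w hw)
    rw [← hn (n + m + 1) (by omega), hE, ← hm (n + m) (by omega)]
    simp
  have hεs : ∀ w ∈ W, ε (s w) = s (w - ε w) := by
    intro w hw
    rw [hrec _ (hsW w hw), hts', hκs', zero_add]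
  have hεκ : ∀ w, ε (κ w) = κ w := by
    intro w
    rw [hrec _ (hκW w), htκ', hκκ']
    simp
  have hεW0 : ∀ n, ∀ w, (t ^ n) w = 0 → ε w ∈ W ∧ ε (ε w) = ε w := by
    intro n
    induction n with
    | zero =>
      intro w hw
      have : w = 0 := by simpa using hw
      simp [this]
    | succ n ih =>
      intro w hw
      have hw0 : (t ^ n) (t w) = 0 := by rwa [← Module.End.mul_apply, ← pow_succ]
      obtain ⟨h1, h2⟩ := ih (t w) hw0
      have htw : t w - ε (t w) ∈ W := W.sub_mem ⟨n, hw0⟩ h1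
      rw [hrec w ⟨n + 1, hw⟩]
      refine ⟨W.add_mem (hκW w) (hsW _ htw), ?_⟩
      rw [map_add, hεκ, hεs _ htw, map_sub ε, h2]
      simp
  have hεW : ∀ w ∈ W, ε w ∈ W := by
    rintro w ⟨n, hn⟩; exact (hεW0 n w hn).1
  have hεε : ∀ w ∈ W, ε (ε w) = ε w := by
    rintro w ⟨n, hn⟩; exact (hεW0 n w hn).2
  have hee := he.1
  have heW := he.2.1
  have hee' : ∀ q, e (e q) = e q := LinearMap.congr_fun hee
  let X : Subring (Module.End R Q) :=
    { carrier := {x | (∀ m ∈ M, x m ∈ M) ∧ ∀ n ∈ N, x n ∈ N}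
      mul_mem' := fun {a b} ha hb => ⟨fun m hm => ha.1 _ (hb.1 m hm),
        fun m hm => ha.2 _ (hb.2 m hm)⟩
      one_mem' := ⟨fun m hm => hm, fun m hm => hm⟩
      add_mem' := fun {a b} ha hb => ⟨fun m hm => M.add_mem (ha.1 m hm) (hb.1 m hm),
        fun m hm => N.add_mem (ha.2 m hm) (hb.2 m hm)⟩
      zero_mem' := ⟨fun m hm => M.zero_mem, fun m hm => N.zero_mem⟩
      neg_mem' := fun {a} ha => ⟨fun m hm => M.neg_mem (ha.1 m hm),
        fun m hm => N.neg_mem (ha.2 m hm)⟩ }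
  have hXu : ∀ x, IsUnit x → x ∈ X := by
    rintro _ ⟨v, rfl⟩
    let φ : Q ≃ₗ[R] Q := LinearMap.GeneralLinearGroup.generalLinearEquiv R Q v
    exact ⟨fun m hm => hM φ m hm, fun m hm => hN φ m hm⟩
  have hcor : ∀ z, e * z * e ∈ X := by
    intro z
    have hsum : e = e * ε * e + e * (1 - ε) * e := by
      linear_combination (norm := noncomm_ring) -hee
    have hF1 : ∀ w ∈ W, (e * ε * e) w = ε w := by
      intro w hw
      simp [Module.End.mul_apply, heW w hw, heW _ (hεW w hw)]
    have hF2 : ∀ w ∈ W, (e * (1 - ε) * e) w = w - ε w := by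
      intro w hw
      simp [Module.End.mul_apply, heW w hw, heW _ (hεW w hw)]
    have hF1e : (e * ε * e) * e = e * ε * e := by rw [mul_assoc, hee]
    have hF2e : (e * (1 - ε) * e) * e = e * (1 - ε) * e := by rw [mul_assoc, hee]
    generalize e * ε * e = F1 at *
    generalize e * (1 - ε) * e = F2 at *
    have hsubW : ∀ w ∈ W, w - ε w ∈ W := fun w hw => W.sub_mem hw (hεW w hw)
    have := corner_mem X hXu F1 F2 t s ?_ ?_ ?_ ?_ z
    · rwa [← hsum] at this
    · refine mem_jac_of_hull he _ (by rw [mul_assoc, hF2e]) (fun w hw => ?_)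
      rw [Module.End.mul_apply, hF2 w hw, hF1 _ (hsubW w hw), map_sub, hεε w hw, sub_self]
    · refine mem_jac_of_hull he _ (by rw [mul_assoc, hF1e]) (fun w hw => ?_)
      rw [Module.End.mul_apply, hF1 w hw, hF2 _ (hεW w hw), hεε w hw, sub_self]
    · rw [← hsum]
      refine mem_jac_of_hull he _ (by rw [sub_mul, hF1e, mul_assoc _ e, hee]) (fun w hw => ?_)
      simp only [LinearMap.sub_apply, Module.End.mul_apply]
      have a1 : F2 (s w) = s (ε w) := by
        rw [hF2 _ (hsW w hw), hεs w hw, map_sub]; abel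
      have a2 : F2 (s (ε w)) = s (ε w) := by
        rw [hF2 _ (hsW _ (hεW w hw)), hεs _ (hεW w hw), hεε w hw, sub_self, map_zero, sub_zero]
      rw [heW w hw, a1, a2, hts', hF1 w hw, hF1 _ (hεW w hw), hεε w hw, sub_self]
    · rw [← hsum]
      refine mem_jac_of_hull he _ (by rw [sub_mul, hF2e, mul_assoc _ e, hee]) (fun w hw => ?_)
      simp only [LinearMap.sub_apply, Module.End.mul_apply]
      have hv := htW w hw
      have hv' := hεW _ hv
      have a2 : F2 (s (ε (t w))) = s (ε (t w)) := by
        rw [hF2 _ (hsW _ hv'), hεs _ hv', hεε _ hv, sub_self, map_zero, sub_zero]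
      rw [heW w hw, hF1 _ hv, hF1 _ hv', hεε _ hv, a2, hF2 w hw, hrec w hw]
      nth_rewrite 2 [hdec w]
      rw [map_sub]; abel
  have heX : e ∈ X := by
    have := hcor 1
    rwa [mul_one, hee] at this
  -- the two diagonal blocks
  have ha : (e * (t * y) * e) * s * e = e := by
    have h1 : e * s * e = e * e2 * s := by rw [mul_assoc, mul_assoc, he2s]
    have h2 : (e * (t * y) * e) * s * e = e * t * (y * e * e2) * s := by
      linear_combination (norm := noncomm_ring) e * t * y * h1
    rw [h2, hyx, mul_assoc _ e2, he2s]
    linear_combination (norm := noncomm_ring) e * hts * e + hee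
  obtain ⟨d, hd⟩ : ∃ d, d = (1 - e) * s * (1 - e) := ⟨_, rfl⟩
  obtain ⟨d', hd'⟩ : ∃ d', d' = (1 - e) * t * (1 - e * y) * (1 - e) := ⟨_, rfl⟩
  have hf : (1 - e) * (1 - e) = 1 - e := by linear_combination (norm := noncomm_ring) hee
  have hef : e * (1 - e) = 0 := by linear_combination (norm := noncomm_ring) -hee
  have hfe : (1 - e) * e = 0 := by linear_combination (norm := noncomm_ring) -hee
  have hse : s * (1 - e) * t = 1 - e2 := by
    rw [he2, hκ]; noncomm_ring
  have hdd' : d * d' = 1 - e := by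
    have h1 : d * d' = (1 - e) * (s * (1 - e) * t) * (1 - e * y) * (1 - e) := by
      rw [hd, hd']
      linear_combination (norm := noncomm_ring) (1 - e) * s * hf * t * (1 - e * y) * (1 - e)
    rw [h1, hse]
    linear_combination (norm := noncomm_ring) hf - hfe * y * (1 - e) + (1 - e) * hxy * (1 - e)
  have hd'd : d' * d = 1 - e := by
    have h1 : (1 - e * y) * (1 - e) = 1 - e * y := by
      linear_combination (norm := noncomm_ring) heye
    have h2 : s * (1 - e) = (1 - e2) * s := by
      linear_combination (norm := noncomm_ring) he2s
    have h3 : (1 - e * y) * (1 - e2) = 1 - e2 := by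
      linear_combination (norm := noncomm_ring) e * hy2
    have h4 : d' * d = (1 - e) * t * ((1 - e * y) * (1 - e)) * (s * (1 - e)) := by
      rw [hd, hd']
      linear_combination (norm := noncomm_ring) (1 - e) * t * (1 - e * y) * hf * s * (1 - e)
    have h5 : (1 - e) * t * (1 - e * y) * ((1 - e2) * s) =
        (1 - e) * t * ((1 - e * y) * (1 - e2)) * s := by noncomm_ring
    rw [h4, h1, h2, h5, h3, mul_assoc, ← h2]
    linear_combination (norm := noncomm_ring) (1 - e) * hts * (1 - e) + hf
  have hed : e * d = 0 := by rw [hd, ← mul_assoc, ← mul_assoc, hef]; simp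
  have hed' : e * d' = 0 := by rw [hd', ← mul_assoc, ← mul_assoc, ← mul_assoc, hef]; simp
  have hde : d * e = 0 := by rw [hd, mul_assoc, hfe, mul_zero]
  have hde' : d' * e = 0 := by rw [hd', mul_assoc, hfe, mul_zero]
  have hu1 : (e + d) * (e + d') = 1 := by
    linear_combination (norm := noncomm_ring) hee + hed' + hde + hdd'
  have hu2 : (e + d') * (e + d) = 1 := by
    linear_combination (norm := noncomm_ring) hee + hed + hde' + hd'd
  refine ⟨LinearEquiv.ofLinearMap (e + d) (e + d') hu1 hu2, ?_⟩
  intro x hx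
  have h1 : e x ∈ M := heX.1 x hx
  have h2 : e x ∈ N := by
    have := (hcor (t * y)).2 _ (hsMN _ h1)
    rwa [← Module.End.mul_apply, ← Module.End.mul_apply, ha] at this
  have h3 : (1 - e) x ∈ M := (X.sub_mem X.one_mem heX).1 x hx
  have h4 : d x ∈ N := by
    have := (X.sub_mem X.one_mem heX).2 _ (hsMN _ h3)
    rwa [← Module.End.mul_apply, ← Module.End.mul_apply, ← hd] at this
  exact N.add_mem h2 h4

theorem IsPureMono.comp {A B C : Type u} [AddCommGroup A] [Module R A] [AddCommGroup B]
    [Module R B] [AddCommGroup C] [Module R C] {g : B →ₗ[R] C} {f : A →ₗ[R] B}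
    (hg : IsPureMono R g) (hf : IsPureMono R f) : IsPureMono R (g ∘ₗ f) :=
  ⟨hg.1.comp hf.1, fun m n r a h => hf.2 m n r a (hg.2 m n r (fun i => f (a i)) h)⟩

theorem exists_split {M N P Q : Type u} [AddCommGroup M] [Module R M] [AddCommGroup N]
    [Module R N] [AddCommGroup P] [Module R P] [AddCommGroup Q] [Module R Q]
    {u : M →ₗ[R] P} {v : N →ₗ[R] Q} (hu : IsPureInjectiveEnvelope R M P u)
    (hv : IsPureInjectiveEnvelope R N Q v) (f : M →ₗ[R] N) (hf : IsPureMono R f) :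
    ∃ (F : P →ₗ[R] Q) (F' : Q →ₗ[R] P), F' ∘ₗ F = LinearMap.id ∧ F ∘ₗ u = v ∘ₗ f := by
  obtain ⟨-, hP, hext, hmin⟩ := hu
  obtain ⟨F, hF⟩ := hext Q hv.2.1 (v ∘ₗ f)
  obtain ⟨h, hh⟩ := hP _ _ (v ∘ₗ f) (hv.1.comp hf) u
  have hb := hmin (h ∘ₗ F) (by rw [LinearMap.comp_assoc, hF, hh])
  let φ := LinearEquiv.ofBijective (h ∘ₗ F) hb
  refine ⟨F, φ.symm.toLinearMap ∘ₗ h, ?_, hF⟩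
  ext x
  exact φ.symm_apply_apply x

theorem exists_iso_le {P Q : Type u} [AddCommGroup P] [Module R P] [AddCommGroup Q] [Module R Q]
    (hQ : IsPureInjective R Q) (M : Submodule R P) (N : Submodule R Q)
    (hM : ∀ φ : P ≃ₗ[R] P, ∀ x ∈ M, φ x ∈ M) (hN : ∀ φ : Q ≃ₗ[R] Q, ∀ x ∈ N, φ x ∈ N)
    (F : P →ₗ[R] Q) (F' : Q →ₗ[R] P) (hF : F' ∘ₗ F = LinearMap.id) (hFM : ∀ x ∈ M, F x ∈ N)
    (θ₀ : P ≃ₗ[R] Q) : ∃ θ : P ≃ₗ[R] Q, ∀ x ∈ M, θ x ∈ N := by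
  obtain ⟨θ, hθ⟩ := step_two hQ (M.map θ₀.toLinearMap) N (by
    rintro φ _ ⟨x, hx, rfl⟩
    exact ⟨θ₀.symm (φ (θ₀ x)), hM ((θ₀.trans φ).trans θ₀.symm) x hx, by simp⟩) hN
    (F ∘ₗ θ₀.symm.toLinearMap) (θ₀.toLinearMap ∘ₗ F') (by
      ext x
      have := LinearMap.congr_fun hF (θ₀.symm x)
      simp only [LinearMap.comp_apply, LinearMap.id_apply] at this
      simp [this]) (by
    rintro _ ⟨x, hx, rfl⟩
    simpa using hFM x hx)
  exact ⟨θ₀.trans θ, fun x hx => hθ _ ⟨x, hx, rfl⟩⟩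

end Aux

/-- **Corollary 3.2.** If `M` and `N` are invariant under automorphisms of their
pure-injective envelopes and there are pure monomorphisms `f : M → N` and `g : N → M`,
then `M ≅ N`. -/
theorem stmt15 (M N : Type u) [AddCommGroup M] [Module R M] [AddCommGroup N] [Module R N]
    (hM : IsPureAutomorphismInvariant R M) (hN : IsPureAutomorphismInvariant R N)
    (f : M →ₗ[R] N) (hf : IsPureMono R f)
    (g : N →ₗ[R] M) (hg : IsPureMono R g) :
    Nonempty (M ≃ₗ[R] N) := by
  obtain ⟨P, _, _, u, hu, hau⟩ := hM
  obtain ⟨Q, _, _, v, hv, hav⟩ := hN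
  obtain ⟨F, F', hF, hFu⟩ := exists_split hu hv f hf
  obtain ⟨G, G', hG, hGv⟩ := exists_split hv hu g hg
  obtain ⟨θ₀⟩ := step_one hu.2.1 F F' G G' hF hG
  have hM' : ∀ φ : P ≃ₗ[R] P, ∀ x ∈ LinearMap.range u, φ x ∈ LinearMap.range u := by
    rintro φ _ ⟨x, rfl⟩
    obtain ⟨k, hk⟩ := hau φ
    exact ⟨k x, LinearMap.congr_fun hk x⟩
  have hN' : ∀ φ : Q ≃ₗ[R] Q, ∀ x ∈ LinearMap.range v, φ x ∈ LinearMap.range v := by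
    rintro φ _ ⟨x, rfl⟩
    obtain ⟨k, hk⟩ := hav φ
    exact ⟨k x, LinearMap.congr_fun hk x⟩
  obtain ⟨θ₁, h₁⟩ := exists_iso_le hv.2.1 _ _ hM' hN' F F' hF (by
    rintro _ ⟨x, rfl⟩
    exact ⟨f x, (LinearMap.congr_fun hFu x).symm⟩) θ₀
  obtain ⟨θ₂, h₂⟩ := exists_iso_le hu.2.1 _ _ hN' hM' G G' hG (by
    rintro _ ⟨x, rfl⟩
    exact ⟨g x, (LinearMap.congr_fun hGv x).symm⟩) θ₀.symm
  have hmap : (LinearMap.range u).map θ₁.toLinearMap = LinearMap.range v := by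
    apply le_antisymm
    · rintro _ ⟨x, hx, rfl⟩
      exact h₁ x hx
    · intro y hy
      exact ⟨(θ₁.trans θ₂).symm (θ₂ y), hM' _ _ (h₂ y hy), by simp⟩
  exact ⟨(LinearEquiv.ofInjective u hu.1.1).trans
    ((θ₁.submoduleMap (LinearMap.range u)).trans
      ((LinearEquiv.ofEq _ _ hmap).trans (LinearEquiv.ofInjective v hv.1.1).symm))⟩
end
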